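/- Consider G_{12q−4,12q} for q ≥ 1. (a) For all sufficiently large p ∈ (0,1) there is a unique p-optimal graph, namely the perfectly balanced subdivision G of the Wagner graph W in which every chain has length exactly q. (b) For q ≥ 8, the imbalanced W-subdivision obtained from G by moving one edge from a rail chain to an adjacent rung chain has (7q−51)q³ > 0 more spanning trees than G, and is therefore strictly more reliable than G for all sufficiently small p; consequently, there is no uniquely optimal graph in G_{12q−4,12q}. -/

import Mathlib

open Classical Finset

noncomputable section

/-- A finite multigraph: edges carry two (possibly equal) endpoints. -/
structure Multigraph where
  V : Type
  E : Type
  [fintV : Fintype V]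
  [fintE : Fintype E]
  src : E → V
  tgt : E → V

attribute [instance] Multigraph.fintV Multigraph.fintE

namespace Multigraph

variable (G : Multigraph)

/-- Number of vertices. -/
def nV : ℕ := Fintype.card G.V

/-- Number of edges (with multiplicity). -/
def nE : ℕ := Fintype.card G.E

/-- One step along an edge belonging to the edge set `S`. -/
def stepOn (S : Finset G.E) (u v : G.V) : Prop :=
  ∃ e ∈ S, (G.src e = u ∧ G.tgt e = v) ∨ (G.src e = v ∧ G.tgt e = u)

/-- The spanning subgraph with edge set `S` is connected. -/
def ConnOn (S : Finset G.E) : Prop :=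
  ∀ u v : G.V, Relation.ReflTransGen (G.stepOn S) u v

/-- `G` is connected. -/
def Connected : Prop := G.ConnOn Finset.univ

/-- The edge set `F` disconnects `G` (i.e. is a disconnection). -/
def Disconnects (F : Finset G.E) : Prop := ¬ G.ConnOn (Finset.univ \ F)

/-- `d i G`: the number of `i`-disconnections of `G`. -/
def d (i : ℕ) : ℕ :=
  ((Finset.univ : Finset (Finset G.E)).filter fun F => F.card = i ∧ G.Disconnects F).card

/-- The all-terminal reliability `R(G,p)`: each edge is independently retained with
probability `p`; this is the probability that the retained spanning subgraph is connected. -/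
def rel (p : ℝ) : ℝ :=
  ∑ S : Finset G.E, if G.ConnOn S then p ^ S.card * (1 - p) ^ (G.nE - S.card) else 0

/-- `e` is a bridge. -/
def IsBridge (e : G.E) : Prop := G.Disconnects {e}

def Bridgeless : Prop := ∀ e : G.E, ¬ G.IsBridge e

/-- The number of spanning trees of `G` (connected spanning subgraphs with `nV - 1` edges). -/
def treeCount : ℕ :=
  ((Finset.univ : Finset (Finset G.E)).filter fun S => S.card + 1 = G.nV ∧ G.ConnOn S).card

/-- The edge-connectivity: the least size of a disconnecting set of edges. -/
def edgeConnectivity : ℕ :=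
  sInf {i : ℕ | ∃ F : Finset G.E, F.card = i ∧ G.Disconnects F}

/-- Degree of a vertex (a loop counts twice). -/
def deg (v : G.V) : ℕ :=
  (Finset.univ.filter fun e => G.src e = v).card +
    (Finset.univ.filter fun e => G.tgt e = v).card

/-- The edges crossing the vertex set `A`. -/
def cutEdges (A : Finset G.V) : Finset G.E :=
  Finset.univ.filter fun e =>
    (G.src e ∈ A ∧ G.tgt e ∉ A) ∨ (G.src e ∉ A ∧ G.tgt e ∈ A)

/-- `F` is a cut: the set of edges crossing a nontrivial bipartition of the vertices. -/
def IsCut (F : Finset G.E) : Prop :=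
  ∃ A : Finset G.V, A.Nonempty ∧ A ≠ Finset.univ ∧ F = G.cutEdges A

/-- `F` is a bond: a minimal cut. -/
def IsBond (F : Finset G.E) : Prop :=
  G.IsCut F ∧ ∀ F' ⊆ F, G.IsCut F' → F' = F

/-- Number of `s`-bonds of `G`. -/
def bondCount (s : ℕ) : ℕ :=
  ((Finset.univ : Finset (Finset G.E)).filter fun F => F.card = s ∧ G.IsBond F).card

/-- Adjacency of vertices. -/
def Adj (u v : G.V) : Prop :=
  ∃ e : G.E, (G.src e = u ∧ G.tgt e = v) ∨ (G.src e = v ∧ G.tgt e = u)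

/-- `G` is simple: no loops and no parallel edges. -/
def IsSimple : Prop :=
  (∀ e : G.E, G.src e ≠ G.tgt e) ∧
    ∀ e f : G.E,
      ((G.src e = G.src f ∧ G.tgt e = G.tgt f) ∨ (G.src e = G.tgt f ∧ G.tgt e = G.src f)) →
        e = f

end Multigraph

/-- `G ∈ 𝒢_{n,m}`: connected with `n` vertices and `m` edges. -/
def memG (G : Multigraph) (n m : ℕ) : Prop :=
  G.nV = n ∧ G.nE = m ∧ G.Connected

/-- Isomorphism of multigraphs. -/
structure MGIso (G H : Multigraph) where
  vMap : G.V ≃ H.V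
  eMap : G.E ≃ H.E
  ends_eq : ∀ e : G.E,
    (H.src (eMap e) = vMap (G.src e) ∧ H.tgt (eMap e) = vMap (G.tgt e)) ∨
    (H.src (eMap e) = vMap (G.tgt e) ∧ H.tgt (eMap e) = vMap (G.src e))

def IsIso (G H : Multigraph) : Prop := Nonempty (MGIso G H)

/-- `G` is `p`-optimal in `𝒢_{n,m}`. -/
def pOptimal (G : Multigraph) (n m : ℕ) (p : ℝ) : Prop :=
  memG G n m ∧ ∀ H : Multigraph, memG H n m → H.rel p ≤ G.rel p

/-- `G` is uniquely optimal in `𝒢_{n,m}`: strictly more reliable than every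
non-isomorphic member, for every `p ∈ (0,1)`. -/
def UniquelyOptimal (G : Multigraph) (n m : ℕ) : Prop :=
  memG G n m ∧ ∀ H : Multigraph, memG H n m → ¬ IsIso G H →
    ∀ p : ℝ, 0 < p → p < 1 → H.rel p < G.rel p

noncomputable instance quotFintype {α : Type} [Fintype α] {r : α → α → Prop} :
    Fintype (Quot r) :=
  letI := Classical.decEq (Quot r)
  Fintype.ofSurjective (Quot.mk r) fun q => Quot.exists_rep q

/-- Identification of the endpoints of zero-weight edges. -/
def zeroRel (D : Multigraph) (w : D.E → ℕ) : D.V → D.V → Prop :=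
  fun u v => ∃ e : D.E, w e = 0 ∧ D.src e = u ∧ D.tgt e = v

/-- The `j`-th node along the chain replacing the edge `e` (whose chain has `w e` edges). -/
def chainNode (D : Multigraph) (w : D.E → ℕ) (e : D.E) (j : ℕ) :
    Quot (zeroRel D w) ⊕ (Σ f : D.E, Fin (w f - 1)) :=
  if h : 0 < j ∧ j < w e then Sum.inr ⟨e, ⟨j - 1, by omega⟩⟩
  else if j = 0 then Sum.inl (Quot.mk _ (D.src e))
  else Sum.inl (Quot.mk _ (D.tgt e))

/-- The weak subdivision of `D` determined by the chain lengths `w`: each edge `e` is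
replaced by a chain with `w e` edges; zero-weight edges are contracted. -/
def subdivide (D : Multigraph) (w : D.E → ℕ) : Multigraph where
  V := Quot (zeroRel D w) ⊕ (Σ f : D.E, Fin (w f - 1))
  E := Σ f : D.E, Fin (w f)
  src f := chainNode D w f.1 f.2.val
  tgt f := chainNode D w f.1 (f.2.val + 1)

/-- The zero-weight edges contain no cycle (no "zero cycle"): they form a forest. -/
def ZeroAcyclic (D : Multigraph) (w : D.E → ℕ) : Prop :=
  Fintype.card (Quot (zeroRel D w)) +
      (Finset.univ.filter fun e : D.E => w e = 0).card = Fintype.card D.V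

/-- `G` is a weak subdivision of `D` with chain lengths `w`. -/
def IsWeakSubdivision (G D : Multigraph) (w : D.E → ℕ) : Prop :=
  ZeroAcyclic D w ∧ IsIso G (subdivide D w)

/-- `D` is a weak distillation of `G`. -/
def IsWeakDistillation (D G : Multigraph) : Prop :=
  ∃ w : D.E → ℕ, IsWeakSubdivision G D w

/-- The chain lengths differ pairwise by at most one. -/
def BalancedWeights {E : Type} (w : E → ℕ) : Prop := ∀ e f : E, w e ≤ w f + 1

/-- `D ∈ 𝒟_k`: connected, cubic, 3-edge-connected, of exceedance `k`. -/
def memDk (k : ℕ) (D : Multigraph) : Prop :=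
  D.Connected ∧ (∀ v : D.V, D.deg v = 3) ∧
    (∀ F : Finset D.E, D.Disconnects F → 3 ≤ F.card) ∧ D.nE = D.nV + k

/-- Identification of the two endpoints of the edge `e`. -/
def contractRel (G : Multigraph) (e : G.E) : G.V → G.V → Prop :=
  fun u v => u = G.src e ∧ v = G.tgt e

/-- Contraction of the edge `e`. -/
def Multigraph.contract (G : Multigraph) (e : G.E) : Multigraph :=
  letI := Classical.decEq G.E
  { V := Quot (contractRel G e)
    E := {f : G.E // f ≠ e}
    src := fun f => Quot.mk _ (G.src f.1)
    tgt := fun f => Quot.mk _ (G.tgt f.1) }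

/-- `G'` is obtained from `G` by shifting an edge: in an intermediate graph `H`
(the expansion of `G` at a vertex by the new edge `e'`), the edges `e, e'` form a
2-bond; contracting `e'` gives back `G`, while contracting `e` gives `G'`. -/
def IsShiftOf (G G' : Multigraph) : Prop :=
  ∃ (H : Multigraph) (e e' : H.E), e ≠ e' ∧
    H.src e ≠ H.tgt e ∧ H.src e' ≠ H.tgt e' ∧
    H.IsBond {e, e'} ∧
    IsIso (H.contract e') G ∧ IsIso (H.contract e) G'

/-- Equivalence of graphs: repeated edge shifting. -/
def EquivalentGraphs (G G' : Multigraph) : Prop :=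
  Relation.ReflTransGen IsShiftOf G G'

/-- `G'` is obtained from `G` by moving the (non-loop) edge `e`: contracting `e` and
expanding a new edge, identified with `e` via `φ`, at an arbitrary vertex.
Equivalently, `G/e` and `G'/φ e` agree, compatibly with the edge identification `φ`. -/
def MovedEdge (G G' : Multigraph) (φ : G.E ≃ G'.E) (e : G.E) : Prop :=
  G.src e ≠ G.tgt e ∧ G'.src (φ e) ≠ G'.tgt (φ e) ∧
  ∃ ψ : Quot (contractRel G e) ≃ Quot (contractRel G' (φ e)),
    ∀ f : G.E, f ≠ e →
      ((ψ (Quot.mk _ (G.src f)) = Quot.mk _ (G'.src (φ f)) ∧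
        ψ (Quot.mk _ (G.tgt f)) = Quot.mk _ (G'.tgt (φ f))) ∨
       (ψ (Quot.mk _ (G.src f)) = Quot.mk _ (G'.tgt (φ f)) ∧
        ψ (Quot.mk _ (G.tgt f)) = Quot.mk _ (G'.src (φ f))))

/-- Move one edge from the chain `a` to the chain `b`. -/
def moveWeight {E : Type} (w : E → ℕ) (a b : E) : E → ℕ :=
  fun g => if g = b then w b + 1 else if g = a then w a - 1 else w g

/-- The chains of maximal length. -/
def maxChains (D : Multigraph) (w : D.E → ℕ) : Finset D.E :=
  Finset.univ.filter fun e => ∀ f : D.E, w f ≤ w e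

/-- The chains of minimal length. -/
def minChains (D : Multigraph) (w : D.E → ℕ) : Finset D.E :=
  Finset.univ.filter fun e => ∀ f : D.E, w e ≤ w f

/-- Degree of `v` within the edge set `S`. -/
def degIn (D : Multigraph) (S : Finset D.E) (v : D.V) : ℕ :=
  (S.filter fun e => D.src e = v).card + (S.filter fun e => D.tgt e = v).card

/-- `S` is a matching (pairwise non-adjacent edges). -/
def IsMatchingIn (D : Multigraph) (S : Finset D.E) : Prop := ∀ v : D.V, degIn D S v ≤ 1

/-- `S` is a path with three edges. -/
def IsPath3In (D : Multigraph) (S : Finset D.E) : Prop :=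
  S.card = 3 ∧ (∀ v : D.V, degIn D S v ≤ 2) ∧
    (Finset.univ.filter fun v : D.V => degIn D S v = 1).card = 2

/-- `S` is the disjoint union of a path with three edges and a single edge. -/
def IsPath3PlusEdgeIn (D : Multigraph) (S : Finset D.E) : Prop :=
  S.card = 4 ∧ (∀ v : D.V, degIn D S v ≤ 2) ∧
    (Finset.univ.filter fun v : D.V => degIn D S v = 1).card = 4 ∧
    ∃ e ∈ S, degIn D S (D.src e) = 2 ∧ degIn D S (D.tgt e) = 2

/-- `S` is the disjoint union of two paths with two edges each. -/
def IsTwoPlusTwoIn (D : Multigraph) (S : Finset D.E) : Prop :=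
  S.card = 4 ∧ (∀ v : D.V, degIn D S v ≤ 2) ∧
    (Finset.univ.filter fun v : D.V => degIn D S v = 1).card = 4 ∧
    ∀ e ∈ S, degIn D S (D.src e) = 1 ∨ degIn D S (D.tgt e) = 1

/-- Two edges sharing a vertex. -/
def AdjEdges (D : Multigraph) (a b : D.E) : Prop :=
  ∃ v : D.V, (D.src a = v ∨ D.tgt a = v) ∧ (D.src b = v ∨ D.tgt b = v)

/-- The number of incidences of edges of weight `c` at the vertex `u`. -/
def incCount (D : Multigraph) (w : D.E → ℕ) (u : D.V) (c : ℕ) : ℕ :=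
  (Finset.univ.filter fun e : D.E => D.src e = u ∧ w e = c).card +
    (Finset.univ.filter fun e : D.E => D.tgt e = u ∧ w e = c).card

/-- The `π^v`-value of the vertex `u`: the number of incident edges of weight `q + 1`
minus the number of incident edges of weight `q - 1`. -/
def piV (D : Multigraph) (w : D.E → ℕ) (q : ℕ) (u : D.V) : ℤ :=
  (incCount D w u (q + 1) : ℤ) -
    (if q = 0 then 0 else (incCount D w u (q - 1) : ℤ))

/-- The `π^v`-values are balanced: pairwise differences at most one. -/
def BalancedPiV (D : Multigraph) (w : D.E → ℕ) (q : ℕ) : Prop :=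
  ∀ u v : D.V, piV D w q u ≤ piV D w q v + 1

/-- The standard weight `q`, where `m = 3kq + r` with `-3k/2 < r ≤ 3k/2`. -/
def stdWeight (m k : ℕ) : ℕ := (2 * m + 3 * k - 1) / (6 * k)

/-- `w` is a balanced weighting of `D` of total size `m` (the implied weak
subdivision is the generic member of `ℬ_m(D)`). -/
def IsBalancedWeighting (D : Multigraph) (w : D.E → ℕ) (m : ℕ) : Prop :=
  (∑ e : D.E, w e) = m ∧ BalancedWeights w ∧ ZeroAcyclic D w

/-- Every 3-bond of `D` is trivial (consists of the three edges at a single vertex). -/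
def OnlyTrivialThreeBonds (D : Multigraph) : Prop :=
  ∀ F : Finset D.E, D.IsBond F → F.card = 3 →
    ∃ u : D.V, F = Finset.univ.filter fun e => D.src e = u ∨ D.tgt e = u

/-- The 3-dipole: two vertices joined by three parallel edges. -/
def dipole3 : Multigraph where
  V := Fin 2
  E := Fin 3
  src _ := 0
  tgt _ := 1

/-- The complete graph `K₄`. -/
def K4 : Multigraph where
  V := Fin 4
  E := {p : Fin 4 × Fin 4 // p.1 < p.2}
  src p := p.1.1
  tgt p := p.1.2

/-- The complete bipartite graph `K_{3,3}`. -/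
def K33 : Multigraph where
  V := Fin 3 ⊕ Fin 3
  E := Fin 3 × Fin 3
  src p := Sum.inl p.1
  tgt p := Sum.inr p.2

/-- The triangular prism `Π₃`; the edges `Sum.inr i` are the rungs. -/
def prism : Multigraph where
  V := Fin 3 × Bool
  E := (Fin 3 × Bool) ⊕ Fin 3
  src := fun e => match e with
    | Sum.inl (i, b) => (i, b)
    | Sum.inr i => (i, false)
  tgt := fun e => match e with
    | Sum.inl (i, b) => (i + 1, b)
    | Sum.inr i => (i, true)

/-- The Wagner graph (the 4-Möbius ladder): the edges `Sum.inl i` are the rails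
(the 8-cycle) and the edges `Sum.inr j` are the rungs. -/
def wagner : Multigraph where
  V := Fin 8
  E := Fin 8 ⊕ Fin 4
  src := fun e => match e with
    | Sum.inl i => i
    | Sum.inr j => ⟨j.val, by omega⟩
  tgt := fun e => match e with
    | Sum.inl i => i + 1
    | Sum.inr j => ⟨j.val + 4, by omega⟩

/-- The Petersen graph. -/
def petersen : Multigraph where
  V := Fin 5 × Bool
  E := Fin 5 ⊕ Fin 5 ⊕ Fin 5
  src := fun e => match e with
    | Sum.inl i => (i, false)
    | Sum.inr (Sum.inl i) => (i, false)
    | Sum.inr (Sum.inr i) => (i, true)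
  tgt := fun e => match e with
    | Sum.inl i => (i + 1, false)
    | Sum.inr (Sum.inl i) => (i, true)
    | Sum.inr (Sum.inr i) => (i + 2, true)

/-!
Write `N i` for the number of survivable failures of `i` edges. Near `p = 1` reliability is governed
by the lexicographic order of `(N 0, N 1, …)`. Maximality of `N 1` excludes bridges, so `H` is a
subdivision of a graph of minimum degree three, with at most twelve chains. Two edges deleted from
one chain disconnect `H`, and by convexity `N 2` is maximal exactly when there are twelve chains of
length `q` over a cubic graph `D` that is 3-edge-connected. Now `N 3` and `N 4` compare as for `D`:
maximality of `N 3` says that the only 3-edge cuts are the eight stars, so `D` is triangle-free and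
hence the Wagner graph or the cube, and these have `N 4` equal to `409` and `408`.

Near `p = 0` the number `N 5` of spanning trees decides. It is the sum of `∏ e ∈ F, w e` over the
survivable 5-sets `F` of `W`. Splitting this sum according to whether the shortened rail and the
lengthened rung lie in `F` gives the difference `(7q - 51)q³`, and a uniquely optimal graph would
have to agree with `G` near `p = 1` and to beat it near `p = 0`.
-/

open Filter Topology

theorem eventually_sum_bernstein_pos {a : ℕ → ℝ} {m i : ℕ} (hi : i ≤ m)
    (hzero : ∀ j < i, a j = 0) (hpos : 0 < a i) :
    ∀ᶠ x in 𝓝[>] (0 : ℝ), 0 < ∑ j ∈ range (m + 1), a j * ((1 - x) ^ (m - j) * x ^ j) := by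
  let g (x : ℝ) := ∑ j ∈ range (m - i + 1), a (i + j) * ((1 - x) ^ (m - (i + j)) * x ^ j)
  have hsplit (x : ℝ) :
      ∑ j ∈ range (m + 1), a j * ((1 - x) ^ (m - j) * x ^ j) = x ^ i * g x := by
    rw [show m + 1 = i + (m - i + 1) by omega, sum_range_add, mul_sum,
      sum_eq_zero fun j hj => by rw [hzero j (mem_range.1 hj), zero_mul], zero_add]
    exact sum_congr rfl fun j _ => by ring
  have hg0 : 0 < g 0 := by simpa [g, sum_range_succ'] using hpos
  have hg : Continuous g := by fun_prop
  filter_upwards [nhdsWithin_le_nhds ((hg.tendsto 0).eventually_const_lt hg0), self_mem_nhdsWithin]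
    with x hx hx0
  exact hsplit x ▸ mul_pos (pow_pos hx0 i) hx

theorem eventually_sum_bernstein_lt {a b : ℕ → ℕ} {m : ℕ} (ha : ∀ j, a j ≤ m.choose j)
    (hlt : toLex b < toLex a) :
    ∀ᶠ x in 𝓝[>] (0 : ℝ), ∑ j ∈ range (m + 1), (b j : ℝ) * ((1 - x) ^ (m - j) * x ^ j) <
      ∑ j ∈ range (m + 1), (a j : ℝ) * ((1 - x) ^ (m - j) * x ^ j) := by
  obtain ⟨i, heq, hlt⟩ := hlt
  have him : i ≤ m := by
    by_contra! him
    exact absurd (hlt.trans_le (ha i)) (by simp [Nat.choose_eq_zero_of_lt him])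
  have hpos := eventually_sum_bernstein_pos (a := fun j => (a j : ℝ) - b j) him
    (fun j hj => sub_eq_zero.2 (congrArg _ (heq j hj).symm)) (sub_pos.2 (Nat.cast_lt.2 hlt))
  filter_upwards [hpos] with x hx
  simpa only [sub_mul, sum_sub_distrib, sub_pos] using hx

theorem finite_setOf_forall_le_choose (m : ℕ) : {a : ℕ → ℕ | ∀ j, a j ≤ m.choose j}.Finite := by
  refine Set.Finite.of_injOn (f := fun a (j : Fin (m + 1)) => a j)
    (t := Set.univ.pi fun j : Fin (m + 1) => Set.Iic (m.choose j)) (fun a ha j _ => ha j)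
    (fun a ha b hb hab => funext fun j => ?_) (.pi fun _ => Set.finite_Iic _)
  obtain hj | hj := lt_or_ge m j
  · have := Nat.choose_eq_zero_of_lt hj
    exact (Nat.le_zero.1 (this ▸ ha j)).trans (Nat.le_zero.1 (this ▸ hb j)).symm
  · exact congrFun hab ⟨j, Nat.lt_succ_of_le hj⟩

namespace Multigraph

variable {G H : Multigraph}

/-- The edge set `F` is a survivable failure: the graph stays connected without the edges of `F`. -/
def Survives (G : Multigraph) (F : Finset G.E) : Prop := G.ConnOn Fᶜ

/-- The number of survivable failures of `i` edges. These numbers are the coefficients of the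
reliability polynomial in the Bernstein basis. -/
def survivalCount (G : Multigraph) (i : ℕ) : ℕ := #{F ∈ powersetCard i univ | G.Survives F}

theorem connOn_iff_forall_coloring {S : Finset G.E} :
    G.ConnOn S ↔ ∀ P : G.V → Prop, (∀ e ∈ S, (P (G.src e) ↔ P (G.tgt e))) → ∀ u v, P u → P v := by
  refine ⟨fun h P hP u v hu => ?_, fun h u v => ?_⟩
  · induction h u v with
    | refl => exact hu
    | tail _ step ih =>
      obtain ⟨e, he, ⟨rfl, rfl⟩ | ⟨rfl, rfl⟩⟩ := step
      exacts [(hP e he).1 ih, (hP e he).2 ih]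
  · refine h (Relation.ReflTransGen (G.stepOn S) u) (fun e he => ⟨fun hu => ?_, fun hu => ?_⟩)
      u v .refl
    exacts [hu.tail ⟨e, he, .inl ⟨rfl, rfl⟩⟩, hu.tail ⟨e, he, .inr ⟨rfl, rfl⟩⟩]

theorem survives_iff {F : Finset G.E} :
    G.Survives F ↔
      ∀ P : G.V → Prop, (∀ e ∉ F, (P (G.src e) ↔ P (G.tgt e))) → ∀ u v, P u → P v := by
  simp only [Survives, connOn_iff_forall_coloring, mem_compl]

theorem Survives.anti {F F' : Finset G.E} (h : G.Survives F') (hF : F ⊆ F') : G.Survives F :=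
  survives_iff.2 fun P hP => survives_iff.1 h P fun e he => hP e fun heF => he (hF heF)

theorem not_disconnects_iff {F : Finset G.E} : ¬ G.Disconnects F ↔ G.Survives F := by
  rw [Disconnects, not_not, Survives, compl_eq_univ_sdiff]

theorem connected_iff_survives_empty : G.Connected ↔ G.Survives ∅ := by
  rw [Connected, Survives, compl_empty]

theorem survivalCount_le_choose (G : Multigraph) (i : ℕ) :
    G.survivalCount i ≤ G.nE.choose i := by
  rw [nE, ← card_univ, ← card_powersetCard]
  exact card_filter_le _ _

theorem survivalCount_eq_choose_iff {i : ℕ} :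
    G.survivalCount i = G.nE.choose i ↔ ∀ F : Finset G.E, #F = i → G.Survives F := by
  rw [nE, ← card_univ, ← card_powersetCard, survivalCount, card_filter_eq_iff]
  simp [mem_powersetCard]

theorem survivalCount_zero (hG : G.Connected) : G.survivalCount 0 = 1 := by
  rw [← Nat.choose_zero_right G.nE, survivalCount_eq_choose_iff]
  simpa using connected_iff_survives_empty.1 hG

theorem ConnOn.nV_le {S : Finset G.E} (hS : G.ConnOn S) : G.nV ≤ #S + 1 := by
  obtain _ | _ := isEmpty_or_nonempty G.V
  · simp [nV]
  let Γ : SimpleGraph G.V := SimpleGraph.fromRel (G.stepOn S)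
  have hΓ : Γ.Connected := by
    refine ⟨fun u v => ?_⟩
    induction hS u v with
    | refl => exact .refl u
    | @tail x y _ step ih =>
      obtain rfl | hxy := eq_or_ne x y
      · exact ih
      · exact ih.trans (SimpleGraph.Adj.reachable ⟨hxy, .inl step⟩)
  have hedges : Γ.edgeSet ⊆ (S.image fun e => s(G.src e, G.tgt e) : Finset (Sym2 G.V)) := by
    refine fun z => z.ind fun x y h => ?_
    obtain ⟨-, ⟨e, he, h⟩ | ⟨e, he, h⟩⟩ := h <;>
      exact mem_coe.2 (mem_image.2 ⟨e, he, by grind⟩)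
  calc G.nV = Nat.card G.V := by rw [nV, Nat.card_eq_fintype_card]
    _ ≤ Nat.card Γ.edgeSet + 1 := hΓ.card_vert_le_card_edgeSet_add_one
    _ ≤ #(S.image fun e => s(G.src e, G.tgt e)) + 1 := by
        gcongr
        simpa using Nat.card_mono (finite_toSet _) hedges
    _ ≤ #S + 1 := by gcongr; exact card_image_le

theorem rel_eq_sum_survivalCount (G : Multigraph) (p : ℝ) :
    G.rel p = ∑ i ∈ range (G.nE + 1), G.survivalCount i * (p ^ (G.nE - i) * (1 - p) ^ i) := by
  have hflip : G.rel p = ∑ F : Finset G.E,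
      if G.Survives F then p ^ (G.nE - #F) * (1 - p) ^ #F else 0 := by
    refine Fintype.sum_equiv (compl_involutive.toPerm _) _ _ fun S => ?_
    simp only [Function.Involutive.coe_toPerm, Survives, compl_compl, card_compl, nE,
      Nat.sub_sub_self (card_le_univ S)]
  rw [hflip, ← powerset_univ, sum_powerset, card_univ]
  refine sum_congr rfl fun i _ => ?_
  rw [survivalCount, ← sum_filter, card_eq_sum_ones, Nat.cast_sum, sum_mul]
  refine sum_congr rfl fun F hF => ?_
  rw [(mem_powersetCard.1 (mem_filter.1 hF).1).2, Nat.cast_one, one_mul]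

theorem survivalCount_eq_zero {i : ℕ} (hi : i ≤ G.nE) (h : G.nE + 1 < G.nV + i) :
    G.survivalCount i = 0 := by
  refine card_eq_zero.2 (filter_eq_empty_iff.2 fun F hF hsurv => ?_)
  have hV := hsurv.nV_le
  have hF := (mem_powersetCard.1 hF).2
  rw [card_compl, ← nE] at hV
  omega

theorem treeCount_eq_survivalCount {k : ℕ} (h : G.nE + 1 = G.nV + k) :
    G.treeCount = G.survivalCount k := by
  rw [treeCount, survivalCount]
  refine card_nbij' compl compl ?_ ?_ (fun _ _ => compl_compl _) fun _ _ => compl_compl _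
  all_goals
    intro S hS
    have hle := card_le_univ S
    simp only [mem_coe, mem_filter, mem_univ, true_and, mem_powersetCard, subset_univ] at hS ⊢
    simp only [Survives, compl_compl, card_compl] at hS ⊢
    rw [nE] at h
    exact ⟨by omega, hS.2⟩

theorem eventually_rel_lt_of_lex_lt (m : ℕ) :
    ∀ᶠ p in 𝓝[<] (1 : ℝ), ∀ G H : Multigraph, G.nE = m → H.nE = m →
      toLex H.survivalCount < toLex G.survivalCount → H.rel p < G.rel p := by
  let 𝒜 := {a : ℕ → ℕ | ∀ j, a j ≤ m.choose j}
  have hall : ∀ᶠ x in 𝓝[>] (0 : ℝ), ∀ a ∈ 𝒜, ∀ b ∈ 𝒜, toLex b < toLex a →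
      ∑ j ∈ range (m + 1), (b j : ℝ) * ((1 - x) ^ (m - j) * x ^ j) <
        ∑ j ∈ range (m + 1), (a j : ℝ) * ((1 - x) ^ (m - j) * x ^ j) := by
    have hfin : 𝒜.Finite := finite_setOf_forall_le_choose m
    simp only [eventually_all_finite hfin, eventually_imp_distrib_left]
    exact fun a ha b _ hlt => eventually_sum_bernstein_lt ha hlt
  have hflip : Tendsto (fun p : ℝ => 1 - p) (𝓝[<] 1) (𝓝[>] 0) :=
    tendsto_nhdsWithin_iff.2
      ⟨((continuous_const.sub continuous_id).tendsto' _ _ (sub_self 1)).mono_left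
        nhdsWithin_le_nhds,
        by filter_upwards [self_mem_nhdsWithin] with p hp using sub_pos.2 (Set.mem_Iio.1 hp)⟩
  filter_upwards [hflip.eventually hall] with p hp G H hG hH hlt
  rw [rel_eq_sum_survivalCount, rel_eq_sum_survivalCount, hG, hH]
  simpa only [sub_sub_cancel] using hp _ (fun j => hG ▸ G.survivalCount_le_choose j) _
    (fun j => hH ▸ H.survivalCount_le_choose j) hlt

theorem eventually_rel_lt_of_treeCount_lt {k : ℕ} (hV : H.nV = G.nV) (hE : H.nE = G.nE)
    (hk : G.nE + 1 = G.nV + k) (hkE : k ≤ G.nE) (hlt : G.treeCount < H.treeCount) :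
    ∀ᶠ p in 𝓝[>] (0 : ℝ), G.rel p < H.rel p := by
  rw [treeCount_eq_survivalCount hk, treeCount_eq_survivalCount (hV ▸ hE ▸ hk)] at hlt
  let a (j : ℕ) : ℝ := H.survivalCount (G.nE - j) - G.survivalCount (G.nE - j)
  have hpos : ∀ᶠ x in 𝓝[>] (0 : ℝ),
      0 < ∑ j ∈ range (G.nE + 1), a j * ((1 - x) ^ (G.nE - j) * x ^ j) := by
    refine eventually_sum_bernstein_pos (i := G.nE - k) (Nat.sub_le _ _) (fun j hj => ?_) ?_
    · simp only [a]
      rw [survivalCount_eq_zero (by omega) (by omega), survivalCount_eq_zero (by omega) (by omega),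
        sub_self]
    · simpa [a, Nat.sub_sub_self hkE] using hlt
  filter_upwards [hpos] with p hp
  rw [← sub_pos, rel_eq_sum_survivalCount, rel_eq_sum_survivalCount, hE, ← sum_sub_distrib,
    ← sum_range_reflect]
  refine hp.trans_eq (sum_congr rfl fun j hj => ?_)
  rw [Nat.add_sub_cancel, Nat.sub_sub_self (mem_range_succ_iff.1 hj)]
  ring

end Multigraph

namespace MGIso

variable {G H : Multigraph}

/-- The inverse of an isomorphism. -/
def symm (f : MGIso G H) : MGIso H G where
  vMap := f.vMap.symm
  eMap := f.eMap.symm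
  ends_eq e := by
    have h := f.ends_eq (f.eMap.symm e)
    simp only [Equiv.apply_symm_apply, ← Equiv.symm_apply_eq] at h
    grind

theorem survives_map (f : MGIso G H) {F : Finset G.E} (hF : G.Survives F) :
    H.Survives (F.map f.eMap.toEmbedding) := by
  refine Multigraph.survives_iff.2 fun P hP u v hu => ?_
  have hG := Multigraph.survives_iff.1 hF (P ∘ f.vMap) (fun e he => ?_)
    (f.vMap.symm u) (f.vMap.symm v)
  · simpa using hG (by simpa using hu)
  · have h := hP (f.eMap e) (by simpa using he)
    simp only [Function.comp_apply]
    obtain ⟨h₁, h₂⟩ | ⟨h₁, h₂⟩ := f.ends_eq e <;> rw [h₁, h₂] at h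
    exacts [h, h.symm]

theorem survivalCount_le (f : MGIso G H) (i : ℕ) : G.survivalCount i ≤ H.survivalCount i := by
  refine card_le_card_of_injOn (map f.eMap.toEmbedding) (fun F hF => ?_)
    (Finset.map_injective _).injOn
  simp only [mem_coe, mem_filter, mem_powersetCard, subset_univ, true_and, card_map] at hF ⊢
  exact ⟨hF.1, f.survives_map hF.2⟩

end MGIso

namespace IsIso

variable {G H : Multigraph}

theorem nV_eq (h : IsIso G H) : G.nV = H.nV := h.elim fun f => Fintype.card_congr f.vMap

theorem nE_eq (h : IsIso G H) : G.nE = H.nE := h.elim fun f => Fintype.card_congr f.eMap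

theorem survivalCount_eq (h : IsIso G H) : G.survivalCount = H.survivalCount :=
  h.elim fun f => funext fun i => (f.survivalCount_le i).antisymm (f.symm.survivalCount_le i)

theorem rel_eq (h : IsIso G H) (p : ℝ) : G.rel p = H.rel p := by
  simp only [Multigraph.rel_eq_sum_survivalCount, h.survivalCount_eq, h.nE_eq]

end IsIso

/-! ### Subdivisions -/

/-- `H` is a subdivision of `D`: the edge `e` of `D` becomes a chain of `w e > 0` edges `edge e j`,
joining the consecutive nodes `node e 0, …, node e (w e)`. Nodes and edges are indexed by all
natural numbers and have junk values beyond the chain. Injectivity of the parametrisation is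
encoded by surjectivity together with the numbers of edges and vertices. -/
structure SubdivisionData (H D : Multigraph) (w : D.E → ℕ) where
  branch : D.V → H.V
  node : D.E → ℕ → H.V
  edge : D.E → ℕ → H.E
  length_pos : ∀ e, 0 < w e
  node_zero : ∀ e, node e 0 = branch (D.src e)
  node_length : ∀ e, node e (w e) = branch (D.tgt e)
  ends_eq : ∀ e, ∀ j < w e,
    (H.src (edge e j) = node e j ∧ H.tgt (edge e j) = node e (j + 1)) ∨
    (H.src (edge e j) = node e (j + 1) ∧ H.tgt (edge e j) = node e j)
  exists_edge_eq : ∀ x, ∃ e, ∃ j < w e, edge e j = x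
  exists_node_eq : ∀ v, (∃ u, branch u = v) ∨ ∃ e j, 0 < j ∧ j < w e ∧ node e j = v
  nE_eq : H.nE = ∑ e, w e
  nV_eq : H.nV = D.nV + ∑ e, (w e - 1)

theorem exists_transversal_of_injOn {ι : Type*} {α : ι → Type*} {F : Finset (Σ i, α i)}
    (hF : Set.InjOn Sigma.fst (F : Set (Σ i, α i))) :
    ∃ f : ∀ i ∈ F.image Sigma.fst, α i,
      F = (F.image Sigma.fst).attach.image fun i => ⟨i.1, f i.1 i.2⟩ := by
  have hex (i) (hi : i ∈ F.image Sigma.fst) : ∃ a, (⟨i, a⟩ : Σ i, α i) ∈ F := by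
    obtain ⟨⟨_, a⟩, ha, rfl⟩ := mem_image.1 hi
    exact ⟨a, ha⟩
  choose f hf using hex
  refine ⟨f, ext fun x => ⟨fun hx => ?_, fun hx => ?_⟩⟩
  · have hi := mem_image_of_mem Sigma.fst hx
    exact mem_image.2 ⟨⟨_, hi⟩, mem_attach _ _, hF (hf _ hi) hx rfl⟩
  · obtain ⟨i, -, rfl⟩ := mem_image.1 hx
    exact hf i.1 i.2

theorem card_transversals {ι : Type*} {α : ι → Type*} [Fintype ι] [∀ i, Fintype (α i)]
    (s : Finset ι) :
    #{F : Finset (Σ i, α i) | Set.InjOn Sigma.fst (F : Set (Σ i, α i)) ∧ F.image Sigma.fst = s} =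
      ∏ i ∈ s, Fintype.card (α i) := by
  simp only [← card_univ]
  rw [← card_pi]
  refine (card_bij (fun f _ => s.attach.image fun i => ⟨i.1, f i.1 i.2⟩) (fun f _ => ?_)
    (fun f _ g _ hfg => ?_) fun F hF => ?_).symm
  · refine mem_filter.2 ⟨mem_univ _, fun x hx y hy hxy => ?_, by ext; simp⟩
    obtain ⟨i, -, rfl⟩ := mem_image.1 (mem_coe.1 hx)
    obtain ⟨j, -, rfl⟩ := mem_image.1 (mem_coe.1 hy)
    obtain rfl : i = j := Subtype.ext hxy
    rfl
  · funext i hi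
    have hmem : (⟨i, f i hi⟩ : Σ i, α i) ∈ s.attach.image fun i => ⟨i.1, g i.1 i.2⟩ :=
      hfg ▸ mem_image.2 ⟨⟨i, hi⟩, mem_attach _ _, rfl⟩
    obtain ⟨⟨j, hj⟩, -, hij⟩ := mem_image.1 hmem
    obtain rfl : j = i := congrArg Sigma.fst hij
    exact (eq_of_heq (Sigma.mk.inj hij).2).symm
  · obtain ⟨-, hinj, rfl⟩ := mem_filter.1 hF
    obtain ⟨f, hf⟩ := exists_transversal_of_injOn hinj
    exact ⟨f, mem_pi.2 fun _ _ => mem_univ _, hf.symm⟩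

namespace SubdivisionData

variable {H H' D D' : Multigraph} {w : D.E → ℕ}

/-- The edges of a subdivision, parametrised by chains and positions. -/
def edgeEquiv (S : SubdivisionData H D w) : (Σ e, Fin (w e)) ≃ H.E :=
  .ofBijective (fun x => S.edge x.1 x.2) <| by
    refine (Fintype.bijective_iff_surjective_and_card _).2 ⟨fun x => ?_, ?_⟩
    · obtain ⟨e, j, hj, rfl⟩ := S.exists_edge_eq x
      exact ⟨⟨e, j, hj⟩, rfl⟩
    · simpa [Multigraph.nE] using S.nE_eq.symm

/-- The vertices of a subdivision: the branch vertices and the interior nodes of the chains. -/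
def vertexEquiv (S : SubdivisionData H D w) : D.V ⊕ (Σ e, Fin (w e - 1)) ≃ H.V :=
  .ofBijective (Sum.elim S.branch fun x => S.node x.1 (x.2 + 1)) <| by
    refine (Fintype.bijective_iff_surjective_and_card _).2 ⟨fun v => ?_, ?_⟩
    · obtain ⟨u, rfl⟩ | ⟨e, j, hj, hjw, rfl⟩ := S.exists_node_eq v
      · exact ⟨.inl u, rfl⟩
      · exact ⟨.inr ⟨e, j - 1, by omega⟩, by simp [Nat.sub_add_cancel hj]⟩
    · simpa [Multigraph.nV] using S.nV_eq.symm

theorem edgeEquiv_apply (S : SubdivisionData H D w) (x : Σ e, Fin (w e)) :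
    S.edgeEquiv x = S.edge x.1 x.2 := rfl

theorem vertexEquiv_inl (S : SubdivisionData H D w) (u : D.V) :
    S.vertexEquiv (.inl u) = S.branch u := rfl

theorem vertexEquiv_inr (S : SubdivisionData H D w) (x : Σ e, Fin (w e - 1)) :
    S.vertexEquiv (.inr x) = S.node x.1 (x.2 + 1) := rfl

/-- The label in `vertexEquiv` of the `j`-th node of the chain `e`. -/
def nodeLabel (w : D.E → ℕ) (e : D.E) (j : ℕ) : D.V ⊕ (Σ e, Fin (w e - 1)) :=
  if h : 0 < j ∧ j < w e then .inr ⟨e, j - 1, by omega⟩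
  else if j = 0 then .inl (D.src e) else .inl (D.tgt e)

theorem vertexEquiv_nodeLabel (S : SubdivisionData H D w) (e : D.E) {j : ℕ} (hj : j ≤ w e) :
    S.vertexEquiv (nodeLabel w e j) = S.node e j := by
  unfold nodeLabel
  split_ifs with h h0
  · rw [vertexEquiv_inr, Nat.sub_add_cancel h.1]
  · rw [vertexEquiv_inl, h0, S.node_zero]
  · obtain rfl : j = w e := by omega
    rw [vertexEquiv_inl, S.node_length]

theorem exists_coloring (S : SubdivisionData H D w) {Q : D.V → Prop} {R : D.E → ℕ → Prop}
    (hzero : ∀ e, R e 0 ↔ Q (D.src e)) (hlength : ∀ e, R e (w e) ↔ Q (D.tgt e)) :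
    ∃ P : H.V → Prop, (∀ u, P (S.branch u) ↔ Q u) ∧ ∀ e, ∀ j ≤ w e, P (S.node e j) ↔ R e j := by
  refine ⟨Sum.elim Q (fun x => R x.1 (x.2 + 1)) ∘ S.vertexEquiv.symm, fun u => ?_, fun e j hj => ?_⟩
  · rw [← S.vertexEquiv_inl, Function.comp_apply, Equiv.symm_apply_apply, Sum.elim_inl]
  · rw [← S.vertexEquiv_nodeLabel e hj, Function.comp_apply, Equiv.symm_apply_apply, nodeLabel]
    split_ifs with h h0
    · simp [Nat.sub_add_cancel h.1]
    · simp [h0, hzero]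
    · obtain rfl : j = w e := by omega
      simp [hlength]

theorem forall_notMem_iff_forall_node (S : SubdivisionData H D w) {F : Finset (Σ e, Fin (w e))}
    {P : H.V → Prop} :
    (∀ x ∉ F.map S.edgeEquiv.toEmbedding, (P (H.src x) ↔ P (H.tgt x))) ↔
      ∀ x ∉ F, (P (S.node x.1 x.2) ↔ P (S.node x.1 (x.2 + 1))) := by
  rw [← S.edgeEquiv.forall_congr_right]
  refine forall_congr' fun x => imp_congr (by simp) ?_
  rw [edgeEquiv_apply]
  obtain ⟨h₁, h₂⟩ | ⟨h₁, h₂⟩ := S.ends_eq x.1 x.2 x.2.2 <;> rw [h₁, h₂]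
  exact Iff.comm

theorem injOn_fst_of_survives (S : SubdivisionData H D w) {F : Finset (Σ e, Fin (w e))}
    (hF : H.Survives (F.map S.edgeEquiv.toEmbedding)) :
    Set.InjOn Sigma.fst (F : Set (Σ e, Fin (w e))) := by
  suffices h : ∀ e (i j : Fin (w e)), ⟨e, i⟩ ∈ F → ⟨e, j⟩ ∈ F → ¬ i < j by
    rintro ⟨e, i⟩ hi ⟨_, j⟩ hj rfl
    rw [(not_lt.1 (h _ _ _ hj hi)).antisymm (not_lt.1 (h _ _ _ hi hj))]
  intro e i j hi hj hij
  -- Colour exactly the nodes between the two deleted edges.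
  obtain ⟨P, hbranch, hnode⟩ := S.exists_coloring (Q := fun _ => False)
    (R := fun f k => f = e ∧ i < k ∧ k ≤ j) (fun f => by simp) fun f => by grind
  have hcol : ∀ x ∉ F, (P (S.node x.1 x.2) ↔ P (S.node x.1 (x.2 + 1))) := by
    rintro ⟨f, k⟩ hk
    rw [hnode f k k.2.le, hnode f (k + 1) k.2]
    obtain rfl | hfe := eq_or_ne f e
    · have hki : k ≠ i := fun h => hk (h ▸ hi)
      have hkj : k ≠ j := fun h => hk (h ▸ hj)
      simp only [true_and]
      omega
    · simp [hfe]
  have hP := Multigraph.survives_iff.1 hF P (S.forall_notMem_iff_forall_node.2 hcol)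
    (S.node e (i + 1)) (S.branch (D.src e))
  rw [hnode e (i + 1) i.2, hbranch] at hP
  exact hP ⟨rfl, by omega, hij⟩

theorem survives_image_fst (S : SubdivisionData H D w) {F : Finset (Σ e, Fin (w e))}
    (hF : H.Survives (F.map S.edgeEquiv.toEmbedding)) : D.Survives (F.image Sigma.fst) := by
  refine Multigraph.survives_iff.2 fun Q hQ u v hu => ?_
  have hcut (e) (he : ∀ i, ⟨e, i⟩ ∉ F) : Q (D.src e) ↔ Q (D.tgt e) :=
    hQ e fun hmem => by obtain ⟨⟨_, i⟩, hi, rfl⟩ := mem_image.1 hmem; exact he i hi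
  -- Each chain keeps the colour of its source up to its last deleted edge.
  obtain ⟨P, hbranch, hnode⟩ := S.exists_coloring (Q := Q)
    (R := fun e k => Q (if ∃ i : Fin (w e), k ≤ i ∧ ⟨e, i⟩ ∈ F then D.src e else D.tgt e))
    (fun e => by
      by_cases he : ∃ i, ⟨e, i⟩ ∈ F
      · simp [he]
      · simp [he, hcut e (not_exists.1 he)])
    fun e => by simp [Fin.is_lt _ |>.not_ge]
  have hcol : ∀ x ∉ F, (P (S.node x.1 x.2) ↔ P (S.node x.1 (x.2 + 1))) := by
    rintro ⟨e, k⟩ hk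
    have hstep : (∃ i : Fin (w e), (k : ℕ) ≤ i ∧ ⟨e, i⟩ ∈ F) ↔
        ∃ i : Fin (w e), (k : ℕ) + 1 ≤ i ∧ ⟨e, i⟩ ∈ F :=
      exists_congr fun i => ⟨fun h => ⟨lt_of_le_of_ne h.1 fun hki => hk (Fin.ext hki ▸ h.2), h.2⟩,
        fun h => ⟨Nat.le_of_succ_le h.1, h.2⟩⟩
    simp only [hnode e k k.2.le, hnode e (k + 1) k.2, hstep]
  have hP := Multigraph.survives_iff.1 hF P (S.forall_notMem_iff_forall_node.2 hcol)
    (S.branch u) (S.branch v)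
  rw [hbranch, hbranch] at hP
  exact hP hu

theorem node_congr (S : SubdivisionData H D w) {P : H.V → Prop} {e : D.E} {i j : ℕ} (hij : i ≤ j)
    (h : ∀ k, i ≤ k → k < j → (P (S.node e k) ↔ P (S.node e (k + 1)))) :
    P (S.node e i) ↔ P (S.node e j) := by
  induction j, hij using Nat.le_induction with
  | base => rfl
  | succ j hij ih =>
    exact (ih fun k hik hkj => h k hik (hkj.trans j.lt_succ_self)).trans (h j hij j.lt_succ_self)

theorem survives_map_of_injOn_fst (S : SubdivisionData H D w) {F : Finset (Σ e, Fin (w e))}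
    (hinj : Set.InjOn Sigma.fst (F : Set (Σ e, Fin (w e)))) (hD : D.Survives (F.image Sigma.fst)) :
    H.Survives (F.map S.edgeEquiv.toEmbedding) := by
  refine Multigraph.survives_iff.2 fun P hP => ?_
  rw [S.forall_notMem_iff_forall_node] at hP
  have hsrc (e) (j) (hj : j ≤ w e) (h : ∀ i : Fin (w e), i < j → ⟨e, i⟩ ∉ F) :
      P (S.node e j) ↔ P (S.branch (D.src e)) := by
    rw [← S.node_zero]
    exact (S.node_congr j.zero_le fun k _ hk => hP ⟨e, k, by omega⟩ (h _ hk)).symm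
  have htgt (e) (j) (hj : j ≤ w e) (h : ∀ i : Fin (w e), j ≤ i → ⟨e, i⟩ ∉ F) :
      P (S.node e j) ↔ P (S.branch (D.tgt e)) := by
    rw [← S.node_length]
    exact S.node_congr hj fun k hjk hk => hP ⟨e, k, hk⟩ (h _ hjk)
  have hbranch : ∀ u v, P (S.branch u) → P (S.branch v) := by
    refine Multigraph.survives_iff.1 hD (P ∘ S.branch) fun e he => ?_
    have he' (i : Fin (w e)) : ⟨e, i⟩ ∉ F := fun hi => he (mem_image_of_mem Sigma.fst hi)
    rw [Function.comp_apply, ← S.node_zero, htgt e 0 (w e).zero_le fun i _ => he' i]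
    rfl
  have hrep (v) : ∃ u, P v ↔ P (S.branch u) := by
    obtain ⟨u, rfl⟩ | ⟨e, j, -, hj, rfl⟩ := S.exists_node_eq v
    · exact ⟨u, .rfl⟩
    by_cases h : ∃ i : Fin (w e), i < j ∧ ⟨e, i⟩ ∈ F
    · obtain ⟨i, hij, hi⟩ := h
      refine ⟨_, htgt e j hj.le fun k hjk hk => ?_⟩
      have hki := hinj (mem_coe.2 hk) (mem_coe.2 hi) rfl
      cases hki
      omega
    · exact ⟨_, hsrc e j hj.le (by simpa using h)⟩
  intro u v hu
  obtain ⟨u', hu'⟩ := hrep u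
  obtain ⟨v', hv'⟩ := hrep v
  exact hv'.2 (hbranch u' v' (hu'.1 hu))

theorem survives_map_iff (S : SubdivisionData H D w) {F : Finset (Σ e, Fin (w e))} :
    H.Survives (F.map S.edgeEquiv.toEmbedding) ↔
      Set.InjOn Sigma.fst (F : Set (Σ e, Fin (w e))) ∧ D.Survives (F.image Sigma.fst) :=
  ⟨fun h => ⟨S.injOn_fst_of_survives h, S.survives_image_fst h⟩,
    fun h => S.survives_map_of_injOn_fst h.1 h.2⟩

theorem survivalCount_eq (S : SubdivisionData H D w) (i : ℕ) :
    H.survivalCount i = ∑ s ∈ powersetCard i univ with D.Survives s, ∏ e ∈ s, w e := by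
  let 𝒯 : Finset (Finset (Σ e, Fin (w e))) :=
    {F | #F = i ∧ Set.InjOn Sigma.fst (F : Set (Σ e, Fin (w e))) ∧ D.Survives (F.image Sigma.fst)}
  have hcard : H.survivalCount i = #𝒯 := by
    refine (card_equiv S.edgeEquiv.finsetCongr fun F => ?_).symm
    simp only [𝒯, mem_filter, mem_univ, true_and, mem_powersetCard_univ, Equiv.finsetCongr_apply,
      card_map, survives_map_iff]
  have hmaps : ∀ F ∈ 𝒯, F.image Sigma.fst ∈ filter D.Survives (powersetCard i univ) := by
    intro F hF
    obtain ⟨-, hi, hinj, hD⟩ := mem_filter.1 hF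
    rw [mem_filter, mem_powersetCard_univ, card_image_of_injOn hinj]
    exact ⟨hi, hD⟩
  rw [hcard, card_eq_sum_card_fiberwise hmaps]
  refine sum_congr rfl fun s hs => ?_
  obtain ⟨hs, hD⟩ := mem_filter.1 hs
  rw [← prod_congr rfl fun e _ => Fintype.card_fin (w e), ← card_transversals s]
  congr 1
  ext F
  simp only [𝒯, mem_filter, mem_univ, true_and]
  refine ⟨fun h => ⟨h.1.2.1, h.2⟩, fun ⟨hinj, hFs⟩ => ⟨⟨?_, hinj, hFs ▸ hD⟩, hFs⟩⟩
  rw [← card_image_of_injOn hinj, hFs, (mem_powersetCard.1 hs).2]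

theorem survivalCount_const {q : ℕ} (S : SubdivisionData H D fun _ => q) (i : ℕ) :
    H.survivalCount i = q ^ i * D.survivalCount i := by
  rw [S.survivalCount_eq, Multigraph.survivalCount, card_eq_sum_ones, mul_sum]
  refine sum_congr rfl fun s hs => ?_
  rw [prod_const, mem_powersetCard_univ.1 (mem_filter.1 hs).1, mul_one]

theorem connected_iff (S : SubdivisionData H D w) : H.Connected ↔ D.Connected := by
  simpa [Multigraph.connected_iff_survives_empty] using S.survives_map_iff (F := ∅)

theorem isIso (S : SubdivisionData H D w) (S' : SubdivisionData H' D w) : IsIso H H' := by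
  refine ⟨S.vertexEquiv.symm.trans S'.vertexEquiv, S.edgeEquiv.symm.trans S'.edgeEquiv, ?_⟩
  rw [← S.edgeEquiv.forall_congr_right]
  rintro ⟨e, j⟩
  have hnode {i : ℕ} (hi : i ≤ w e) :
      S'.node e i = S'.vertexEquiv (S.vertexEquiv.symm (S.node e i)) := by
    rw [← S.vertexEquiv_nodeLabel e hi, Equiv.symm_apply_apply, S'.vertexEquiv_nodeLabel e hi]
  have h := S.ends_eq e j j.2
  have h' := S'.ends_eq e j j.2
  rw [hnode j.2.le, hnode j.2] at h'
  simp only [Equiv.trans_apply, Equiv.symm_apply_apply]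
  rw [edgeEquiv_apply, edgeEquiv_apply]
  grind

/-- Every graph is its own subdivision with chains of length one. -/
def refl (D : Multigraph) : SubdivisionData D D fun _ => 1 where
  branch := id
  node e j := if j = 0 then D.src e else D.tgt e
  edge e _ := e
  length_pos _ := one_pos
  node_zero _ := rfl
  node_length _ := rfl
  ends_eq e j hj := .inl (by simp [Nat.lt_one_iff.1 hj])
  exists_edge_eq e := ⟨e, 0, one_pos, rfl⟩
  exists_node_eq v := .inl ⟨v, rfl⟩
  nE_eq := by simp [Multigraph.nE]
  nV_eq := by simp

/-- The graph `subdivide D w` as a subdivision of `D`, when all chain lengths are positive. -/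
def ofSubdivide (D : Multigraph) (w : D.E → ℕ) (hw : ∀ e, 0 < w e) :
    SubdivisionData (subdivide D w) D w where
  branch u := .inl (Quot.mk _ u)
  node e j := chainNode D w e j
  edge e j := ⟨e, j % w e, Nat.mod_lt _ (hw e)⟩
  length_pos := hw
  node_zero e := by simp [chainNode]; rfl
  node_length e := by simp [chainNode, (hw e).ne']; rfl
  ends_eq e j hj := .inl (by simp [subdivide, Nat.mod_eq_of_lt hj])
  exists_edge_eq x := ⟨x.1, x.2, x.2.2, by
    refine Sigma.ext rfl (heq_of_eq (Fin.ext ?_))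
    exact Nat.mod_eq_of_lt x.2.2⟩
  exists_node_eq := by
    rintro (⟨⟨u⟩⟩ | ⟨e, j⟩)
    · exact .inl ⟨u, rfl⟩
    · have hj : (j : ℕ) + 1 < w e := by omega
      exact .inr ⟨e, j + 1, j.val.succ_pos, hj, by simp [chainNode, hj]; rfl⟩
  nE_eq := by
    rw [Multigraph.nE, ← card_univ]
    exact (card_sigma _ _).trans (by simp)
  nV_eq := by
    have hquot : Fintype.card (Quot (zeroRel D w)) = Fintype.card D.V := by
      refine (Fintype.card_of_bijective (f := Quot.mk (zeroRel D w))
        ⟨fun u v huv => ?_, Quot.mk_surjective⟩).symm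
      refine congrArg (Quot.lift id ?_) huv
      rintro _ _ ⟨e, he, -⟩
      exact absurd he (hw e).ne'
    have hcard : Fintype.card (Quot (zeroRel D w) ⊕ (Σ e, Fin (w e - 1))) =
        D.nV + ∑ e, (w e - 1) := by
      simp [hquot, Multigraph.nV]
    rw [← hcard, Multigraph.nV]
    exact Fintype.card_congr (.refl _)

/-- Transport of a subdivision along an isomorphism of the subdivided graph. An isomorphism may
exchange the source and the target of an edge; its chain is then traversed backwards. -/
def map (S : SubdivisionData H D w) (f : MGIso D D') :
    SubdivisionData H D' (w ∘ f.eMap.symm) where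
  branch := S.branch ∘ f.vMap.symm
  node e' j :=
    let e := f.eMap.symm e'
    S.node e (if D'.src e' = f.vMap (D.src e) then j else w e - j)
  edge e' j :=
    let e := f.eMap.symm e'
    S.edge e (if D'.src e' = f.vMap (D.src e) then j else w e - 1 - j)
  length_pos e' := S.length_pos _
  node_zero e' := by
    have h := f.ends_eq (f.eMap.symm e')
    have h0 := S.node_zero (f.eMap.symm e')
    have hl := S.node_length (f.eMap.symm e')
    rw [Equiv.apply_symm_apply] at h
    simp only [Function.comp_apply]
    split_ifs with hs
    · rw [hs, Equiv.symm_apply_apply, h0]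
    · obtain h | h := h
      · exact absurd h.1 hs
      · rw [h.1, Equiv.symm_apply_apply, Nat.sub_zero, hl]
  node_length e' := by
    have h := f.ends_eq (f.eMap.symm e')
    have h0 := S.node_zero (f.eMap.symm e')
    have hl := S.node_length (f.eMap.symm e')
    rw [Equiv.apply_symm_apply] at h
    simp only [Function.comp_apply]
    split_ifs with hs
    · grind [f.vMap.injective]
    · obtain h | h := h
      · exact absurd h.1 hs
      · rw [h.2, Equiv.symm_apply_apply, Nat.sub_self, h0]
  ends_eq e' j hj := by
    simp only [Function.comp_apply] at hj ⊢
    split_ifs with hs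
    · exact S.ends_eq _ j hj
    · have h := S.ends_eq (f.eMap.symm e') (w (f.eMap.symm e') - 1 - j) (by omega)
      rw [show w (f.eMap.symm e') - 1 - j + 1 = w (f.eMap.symm e') - j by omega] at h
      rw [show w (f.eMap.symm e') - (j + 1) = w (f.eMap.symm e') - 1 - j by omega]
      exact h.symm
  exists_edge_eq x := by
    obtain ⟨e, j, hj, rfl⟩ := S.exists_edge_eq x
    by_cases hs : D'.src (f.eMap e) = f.vMap (D.src e)
    · exact ⟨f.eMap e, j, by simpa using hj, by simp [hs]⟩
    · refine ⟨f.eMap e, w e - 1 - j, ?_, ?_⟩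
      · simpa using Nat.sub_one_sub_lt hj
      · simp [hs, show w e - 1 - (w e - 1 - j) = j by omega]
  exists_node_eq v := by
    obtain ⟨u, rfl⟩ | ⟨e, j, hj, hjw, rfl⟩ := S.exists_node_eq v
    · exact .inl ⟨f.vMap u, by simp⟩
    by_cases hs : D'.src (f.eMap e) = f.vMap (D.src e)
    · exact .inr ⟨f.eMap e, j, hj, by simpa using hjw, by simp [hs]⟩
    · refine .inr ⟨f.eMap e, w e - j, by omega, ?_, ?_⟩
      · simpa using Nat.sub_lt (hj.trans hjw) hj
      · simp [hs, show w e - (w e - j) = j by omega]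
  nE_eq := by rw [S.nE_eq]; exact (Equiv.sum_comp f.eMap.symm w).symm
  nV_eq := by
    rw [S.nV_eq, (show IsIso D D' from ⟨f⟩).nV_eq]
    exact congrArg _ (Equiv.sum_comp f.eMap.symm (w · - 1)).symm

end SubdivisionData

/-! ### Edge cuts and suppression of vertices of degree two -/

namespace Multigraph

variable {G : Multigraph}

theorem Survives.eq_empty_or_eq_univ {F : Finset G.E} (hF : G.Survives F) {A : Finset G.V}
    (hA : G.cutEdges A ⊆ F) : A = ∅ ∨ A = univ := by
  refine A.eq_empty_or_nonempty.imp_right fun ⟨u, hu⟩ => eq_univ_of_forall fun v => ?_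
  refine survives_iff.1 hF (· ∈ A) (fun e he => ?_) u v hu
  have he' := mt (@hA e) he
  simp only [cutEdges, mem_filter, mem_univ, true_and] at he'
  tauto

theorem deg_eq_card_cutEdges_add (v : G.V) :
    G.deg v = #(G.cutEdges {v}) + 2 * #{e : G.E | G.src e = v ∧ G.tgt e = v} := by
  simp only [deg, cutEdges, card_filter, mul_sum, ← sum_add_distrib, mem_singleton]
  refine sum_congr rfl fun e _ => ?_
  by_cases hs : G.src e = v <;> by_cases ht : G.tgt e = v <;> simp [hs, ht]

theorem sum_deg : ∑ v, G.deg v = 2 * G.nE := by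
  simp only [deg, sum_add_distrib]
  rw [← card_eq_sum_card_fiberwise (f := G.src) (s := univ) (by simp),
    ← card_eq_sum_card_fiberwise (f := G.tgt) (s := univ) (by simp), card_univ, nE, two_mul]

theorem exists_cutEdges_singleton_eq_pair (hconn : G.Connected) (hbridge : ∀ e, G.Survives {e})
    (hE : G.nV < G.nE) {v : G.V} (hv : G.deg v < 3) :
    (∀ e, G.src e = v → G.tgt e ≠ v) ∧ ∃ a b, a ≠ b ∧ G.cutEdges {v} = {a, b} := by
  have hne : ({v} : Finset G.V) ≠ univ := by
    intro h
    have hsum := G.sum_deg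
    have hnV : G.nV = 1 := by rw [nV, ← card_univ, ← h, card_singleton]
    rw [← h, sum_singleton] at hsum
    omega
  have hproper : ¬ (({v} : Finset G.V) = ∅ ∨ {v} = univ) := by simp [hne]
  have h0 : G.cutEdges {v} ≠ ∅ := fun h =>
    hproper ((connected_iff_survives_empty.1 hconn).eq_empty_or_eq_univ h.subset)
  have h1 (e) : G.cutEdges {v} ≠ {e} := fun h =>
    hproper ((hbridge e).eq_empty_or_eq_univ h.subset)
  have hdeg := deg_eq_card_cutEdges_add v
  have h2 : 1 < #(G.cutEdges {v}) := by
    by_contra! h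
    obtain h | h := Nat.le_one_iff_eq_zero_or_eq_one.1 h
    · exact h0 (card_eq_zero.1 h)
    · exact (card_eq_one.1 h).elim h1
  have hloop : #{e : G.E | G.src e = v ∧ G.tgt e = v} = 0 := by omega
  refine ⟨fun e hs ht => ?_, card_eq_two.1 (by omega)⟩
  simpa using (card_eq_zero.1 hloop).subset (mem_filter.2 ⟨mem_univ e, hs, ht⟩)

/-- The graph `G` with the edges in `R` reversed. -/
def reorient (G : Multigraph) (R : Finset G.E) : Multigraph where
  V := G.V
  E := G.E
  src e := if e ∈ R then G.tgt e else G.src e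
  tgt e := if e ∈ R then G.src e else G.tgt e

/-- Reversing edges does not change the isomorphism class. -/
def reorientIso (G : Multigraph) (R : Finset G.E) : MGIso G (G.reorient R) where
  vMap := .refl _
  eMap := .refl _
  ends_eq e := by
    by_cases he : e ∈ R
    · exact .inr ⟨if_pos he, if_pos he⟩
    · exact .inl ⟨if_neg he, if_neg he⟩

/-- Suppression of a vertex `v` of degree two whose incident edges are `a`, entering `v`, and `b`,
leaving `v`: the edge `b` is deleted, and `a` is prolonged to the end of `b`. -/
def suppress (G : Multigraph) {v : G.V} {a b : G.E} (hab : a ≠ b) (hsrc : ∀ e, G.src e = v ↔ e = b)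
    (htgt : ∀ e, G.tgt e = v ↔ e = a) : Multigraph where
  V := {u // u ≠ v}
  E := {e // e ≠ b}
  src e := ⟨G.src e, mt (hsrc e).1 e.2⟩
  tgt e := if h : e = a then ⟨G.tgt b, mt (htgt b).1 hab.symm⟩ else ⟨G.tgt e, mt (htgt e).1 h⟩

theorem nV_suppress {v : G.V} {a b : G.E} (hab : a ≠ b) (hsrc : ∀ e, G.src e = v ↔ e = b)
    (htgt : ∀ e, G.tgt e = v ↔ e = a) : (G.suppress hab hsrc htgt).nV + 1 = G.nV := by
  have hpos : 0 < Fintype.card G.V := Fintype.card_pos_iff.2 ⟨v⟩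
  have hcard : Fintype.card {u // u ≠ v} = Fintype.card G.V - 1 := by
    simp [Fintype.card_subtype_compl]
  rw [nV, nV, ← Nat.sub_add_cancel hpos, ← hcard]
  exact congrArg (· + 1) (Fintype.card_congr (.refl _))

end Multigraph

theorem sum_subtype_ne_add {ι M : Type*} [Fintype ι] [AddCommMonoid M] {a b : ι} (hab : a ≠ b)
    {f g : ι → M} (hfg : ∀ i, i ≠ a → i ≠ b → g i = f i) :
    ∑ i : {i // i ≠ b}, g i + (f a + f b) = g a + ∑ i, f i := by
  let a' : {i // i ≠ b} := ⟨a, hab⟩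
  have hrest : ∑ i : {i // i ≠ a'}, g i.1 = ∑ i : {i // i ≠ a'}, f i.1 :=
    Fintype.sum_congr _ _ fun i => hfg _ (fun h => i.2 (Subtype.ext h)) i.1.2
  rw [Fintype.sum_eq_add_sum_subtype_ne f b, Fintype.sum_eq_add_sum_subtype_ne (fun i => g i.1) a',
    Fintype.sum_eq_add_sum_subtype_ne (fun i : {i // i ≠ b} => f i.1) a', hrest]
  abel

namespace SubdivisionData

variable {H D : Multigraph} {w : D.E → ℕ}

theorem nE_add_nV (S : SubdivisionData H D w) : H.nE + D.nV = H.nV + D.nE := by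
  have hsum : ∑ e, w e = ∑ e, (w e - 1) + D.nE := by
    rw [Multigraph.nE, ← card_univ, card_eq_sum_ones, ← sum_add_distrib]
    exact sum_congr rfl fun e _ => (Nat.sub_add_cancel (S.length_pos e)).symm
  have hE := S.nE_eq
  have hV := S.nV_eq
  omega

theorem survives_singleton (S : SubdivisionData H D w) (hH : ∀ x, H.Survives {x}) (e : D.E) :
    D.Survives {e} := by
  simpa using S.survives_image_fst (F := {⟨e, 0, S.length_pos e⟩}) (by simpa using hH _)

/-- A subdivision of `D` is a subdivision of every graph obtained by suppressing a vertex of degree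
two, the chain of `b` being appended to that of `a`. -/
def suppress (S : SubdivisionData H D w) {v : D.V} {a b : D.E} (hab : a ≠ b)
    (hsrc : ∀ e, D.src e = v ↔ e = b) (htgt : ∀ e, D.tgt e = v ↔ e = a) :
    SubdivisionData H (D.suppress hab hsrc htgt)
      fun e => if e.1 = a then w a + w b else w e.1 where
  branch u := S.branch u.1
  node e j := if e.1 = a ∧ w a < j then S.node b (j - w a) else S.node e.1 j
  edge e j := if e.1 = a ∧ w a ≤ j then S.edge b (j - w a) else S.edge e.1 j
  length_pos e := by
    have := S.length_pos a
    have := S.length_pos e.1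
    split_ifs <;> omega
  node_zero e := by simp [S.node_zero]; rfl
  node_length e := by
    have hb := S.length_pos b
    by_cases he : e.1 = a
    · simp [he, hb, S.node_length, Multigraph.suppress]
    · simp [he, S.node_length, Multigraph.suppress]
  ends_eq e j hj := by
    have hjoin : S.node a (w a) = S.node b 0 := by
      rw [S.node_zero, S.node_length, (hsrc b).2 rfl, (htgt a).2 rfl]
    by_cases he : e.1 = a
    · obtain hja | hja := lt_or_ge j (w a)
      · simpa [he, hja.not_ge, hja.not_gt, Nat.succ_le_of_lt hja |>.not_gt] using S.ends_eq a j hja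
      · have hj' : j - w a < w b := by simp [he] at hj; omega
        obtain rfl | hlt := hja.eq_or_lt
        · simpa [he, hjoin] using S.ends_eq b 0 (S.length_pos b)
        · simpa [he, hja, hlt, Nat.lt_succ_of_lt hlt, Nat.succ_sub hja] using S.ends_eq b _ hj'
    · simpa [he] using S.ends_eq e.1 j (by simpa [he] using hj)
  exists_edge_eq x := by
    obtain ⟨e, j, hj, rfl⟩ := S.exists_edge_eq x
    by_cases heb : e = b
    · subst heb
      exact ⟨⟨a, hab⟩, w a + j, by simpa using hj, by simp⟩
    · refine ⟨⟨e, heb⟩, j, ?_, ?_⟩ <;> grind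
  exists_node_eq x := by
    obtain ⟨u, rfl⟩ | ⟨e, j, hj, hjw, rfl⟩ := S.exists_node_eq x
    · by_cases huv : u = v
      · refine .inr ⟨⟨a, hab⟩, w a, S.length_pos a, by simpa using S.length_pos b, ?_⟩
        simp [S.node_length, huv, (htgt a).2 rfl]
      · exact .inl ⟨⟨u, huv⟩, rfl⟩
    by_cases heb : e = b
    · subst heb
      exact .inr ⟨⟨a, hab⟩, w a + j, by omega, by simpa using hjw, by simp [hj]⟩
    · refine .inr ⟨⟨e, heb⟩, j, hj, ?_, ?_⟩ <;> grind
  nE_eq := by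
    have h := sum_subtype_ne_add hab (f := w) (g := fun e => if e = a then w a + w b else w e)
      fun e hea _ => if_neg hea
    rw [if_pos rfl, add_comm] at h
    exact S.nE_eq.trans (Nat.add_left_cancel h).symm
  nV_eq := by
    have hV := Multigraph.nV_suppress hab hsrc htgt
    have ha := S.length_pos a
    have hb := S.length_pos b
    have h := sum_subtype_ne_add hab (f := fun e => w e - 1)
      (g := fun e => (if e = a then w a + w b else w e) - 1) fun e hea _ => by rw [if_neg hea]
    rw [if_pos rfl] at h
    change _ = _ + ∑ e : {e // e ≠ b}, ((if e.1 = a then w a + w b else w e.1) - 1)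
    rw [S.nV_eq]
    omega

open Multigraph in
theorem exists_nV_lt_of_cutEdges_eq_pair (S : SubdivisionData H D w) {v : D.V}
    (hloop : ∀ e, D.src e = v → D.tgt e ≠ v) {a b : D.E} (hab : a ≠ b)
    (hcut : D.cutEdges {v} = {a, b}) :
    ∃ (D' : Multigraph) (w' : D'.E → ℕ), D'.nV < D.nV ∧ Nonempty (SubdivisionData H D' w') := by
  have hinc (e) : D.src e = v ∧ D.tgt e ≠ v ∨ D.src e ≠ v ∧ D.tgt e = v ↔ e = a ∨ e = b := by
    simpa [cutEdges] using Finset.ext_iff.1 hcut e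
  let R : Finset D.E := {e | e = a ∧ D.src e = v ∨ e = b ∧ D.tgt e = v}
  have hR (e) : e ∈ R ↔ e = a ∧ D.src e = v ∨ e = b ∧ D.tgt e = v := by simp [R]
  have hsrc (e) : (D.reorient R).src e = v ↔ e = b := by
    simp only [reorient]
    grind
  have htgt (e) : (D.reorient R).tgt e = v ↔ e = a := by
    simp only [reorient]
    grind
  refine ⟨_, _, ?_, ⟨(S.map (reorientIso D R)).suppress hab hsrc htgt⟩⟩
  exact Nat.lt_of_succ_le (nV_suppress (G := D.reorient R) hab hsrc htgt).le

theorem exists_subdivisionData_three_le_deg {H : Multigraph} (hconn : H.Connected)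
    (hbridge : ∀ e, H.Survives {e}) (hE : H.nV < H.nE) :
    ∃ (D : Multigraph) (w : D.E → ℕ), Nonempty (SubdivisionData H D w) ∧ ∀ v, 3 ≤ D.deg v := by
  let IsSize (n : ℕ) : Prop :=
    ∃ (D : Multigraph) (w : D.E → ℕ), D.nV = n ∧ Nonempty (SubdivisionData H D w)
  have hex : ∃ n, IsSize n := ⟨_, H, _, rfl, ⟨.refl H⟩⟩
  obtain ⟨D, w, hn, ⟨S⟩⟩ := Nat.find_spec hex
  refine ⟨D, w, ⟨S⟩, fun v => ?_⟩
  by_contra! hv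
  obtain ⟨hloop, a, b, hab, hcut⟩ := Multigraph.exists_cutEdges_singleton_eq_pair
    (S.connected_iff.1 hconn) (S.survives_singleton hbridge) (by have := S.nE_add_nV; omega) hv
  obtain ⟨D', w', hlt, hS'⟩ := S.exists_nV_lt_of_cutEdges_eq_pair hloop hab hcut
  exact Nat.find_min hex (hn ▸ hlt) ⟨D', w', rfl, hS'⟩

end SubdivisionData

/-! ### Pairs of deleted edges -/

theorem two_mul_esymm_two_add_sum_sq {R : Type*} [CommSemiring R] (s : Multiset R) :
    2 * s.esymm 2 + (s.map (· ^ 2)).sum = s.sum ^ 2 := by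
  induction s using Multiset.induction with
  | empty => simp [Multiset.esymm, Multiset.powersetCard_zero_right]
  | cons a s ih =>
    have hcons : (a ::ₘ s).esymm 2 = s.esymm 2 + a * s.sum := by
      have hmap : (s.map fun x => a * x).sum = a * s.sum :=
        Multiset.sum_map_mul_left.trans (by rw [Multiset.map_id'])
      rw [Multiset.esymm, Multiset.powersetCard_cons, Multiset.map_add, Multiset.sum_add,
        Multiset.powersetCard_one, Multiset.map_map, Multiset.map_map, ← hmap]
      simp [Multiset.esymm, Function.comp_def]
    rw [hcons, Multiset.map_cons, Multiset.sum_cons, Multiset.sum_cons, add_sq, ← ih]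
    ring

theorem two_mul_sum_powersetCard_two_add {ι : Type*} [Fintype ι] {w : ι → ℕ} {n q : ℕ}
    (hw : ∑ i, w i = n * q) :
    2 * (∑ s ∈ powersetCard 2 univ, ∏ i ∈ s, (w i : ℤ)) + ∑ i, ((w i : ℤ) - q) ^ 2 +
      (n - Fintype.card ι) * q ^ 2 = 2 * (n.choose 2 * q ^ 2) := by
  have hesymm := two_mul_esymm_two_add_sum_sq ((univ : Finset ι).val.map fun i => (w i : ℤ))
  rw [esymm_map_val, Multiset.map_map] at hesymm
  have hw' : ∑ i, (w i : ℤ) = n * q := mod_cast hw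
  have hdev : ∑ i, ((w i : ℤ) - q) ^ 2 =
      ∑ i, (w i : ℤ) ^ 2 - 2 * (n * q) * q + Fintype.card ι * q ^ 2 := by
    simp only [sub_sq, sum_add_distrib, sum_sub_distrib, ← sum_mul, ← mul_sum, hw', sum_const,
      card_univ, nsmul_eq_mul]
  have hchoose : 2 * (n.choose 2 : ℤ) = n * (n - 1) := by
    have h := Nat.cast_choose_two ℚ n
    rw [eq_div_iff two_ne_zero, mul_comm] at h
    exact_mod_cast h
  simp only [Function.comp_def] at hesymm
  change _ + ∑ i, (w i : ℤ) ^ 2 = (∑ i, (w i : ℤ)) ^ 2 at hesymm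
  rw [hw'] at hesymm
  rw [hdev]
  linear_combination hesymm - q ^ 2 * hchoose

theorem sum_powersetCard_two_le {ι : Type*} [Fintype ι] {w : ι → ℕ} {n q : ℕ}
    (hn : Fintype.card ι ≤ n) (hw : ∑ i, w i = n * q) :
    ∑ s ∈ powersetCard 2 univ, ∏ i ∈ s, w i ≤ n.choose 2 * q ^ 2 := by
  have h := two_mul_sum_powersetCard_two_add hw
  have hsq : 0 ≤ ∑ i, ((w i : ℤ) - q) ^ 2 := sum_nonneg fun i _ => sq_nonneg _
  have hcard : 0 ≤ ((n : ℤ) - Fintype.card ι) * q ^ 2 := by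
    have : 0 ≤ (n : ℤ) - Fintype.card ι := sub_nonneg.2 (mod_cast hn)
    positivity
  zify
  linarith

theorem eq_const_of_sum_powersetCard_two_eq {ι : Type*} [Fintype ι] {w : ι → ℕ} {n q : ℕ}
    (hq : 0 < q) (hn : Fintype.card ι ≤ n) (hw : ∑ i, w i = n * q)
    (heq : ∑ s ∈ powersetCard 2 univ, ∏ i ∈ s, w i = n.choose 2 * q ^ 2) :
    Fintype.card ι = n ∧ ∀ i, w i = q := by
  have h := two_mul_sum_powersetCard_two_add hw
  zify at heq
  have hsq (i) (_ : i ∈ univ) : 0 ≤ ((w i : ℤ) - q) ^ 2 := sq_nonneg _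
  have hcard : 0 ≤ (n : ℤ) - Fintype.card ι := sub_nonneg.2 (mod_cast hn)
  have hcard' : 0 ≤ ((n : ℤ) - Fintype.card ι) * q ^ 2 := by positivity
  have hsum := sum_nonneg hsq
  have hzero : ∑ i, ((w i : ℤ) - q) ^ 2 = 0 := by linarith
  constructor
  · have hmul : ((n : ℤ) - Fintype.card ι) * q ^ 2 = 0 := by linarith
    obtain h | h := mul_eq_zero.1 hmul
    · omega
    · simp [hq.ne'] at h
  · intro i
    have := (sum_eq_zero_iff_of_nonneg hsq).1 hzero i (mem_univ i)
    have := pow_eq_zero_iff two_ne_zero |>.1 this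
    omega

section

variable {H : Multigraph} {k q : ℕ}

theorem nE_le_of_three_le_deg {D : Multigraph} (hdeg : ∀ v, 3 ≤ D.deg v) (hE : D.nE = D.nV + k) :
    D.nE ≤ 3 * k := by
  have hsum : #(univ : Finset D.V) • 3 ≤ ∑ v, D.deg v := card_nsmul_le_sum _ _ _ fun v _ => hdeg v
  rw [D.sum_deg, card_univ, smul_eq_mul, ← Multigraph.nV] at hsum
  omega

theorem deg_eq_three {D : Multigraph} (hdeg : ∀ v, 3 ≤ D.deg v) (hV : D.nE = D.nV + k)
    (hE : D.nE = 3 * k) (v : D.V) : D.deg v = 3 := by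
  have hsum : ∑ v : D.V, 3 = ∑ v, D.deg v := by
    rw [D.sum_deg, sum_const, card_univ, smul_eq_mul, ← Multigraph.nV]
    omega
  exact ((sum_eq_sum_iff_of_le fun v _ => hdeg v).1 hsum v (mem_univ v)).symm

theorem three_le_card_of_disconnects {D : Multigraph}
    (hpairs : ∀ F : Finset D.E, #F = 2 → D.Survives F) (hE : 2 ≤ D.nE) {F : Finset D.E}
    (hF : D.Disconnects F) : 3 ≤ #F := by
  by_contra! hlt
  obtain ⟨F', hFF', hF'⟩ := exists_superset_card_eq (Nat.le_of_lt_succ hlt) hE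
  exact Multigraph.not_disconnects_iff.2 ((hpairs F' hF').anti hFF') hF

theorem exists_subdivisionData_of_card (hconn : H.Connected) (hbridge : ∀ e, H.Survives {e})
    (hk : 0 < k) (hE : H.nE = H.nV + k) :
    ∃ (D : Multigraph) (w : D.E → ℕ), Nonempty (SubdivisionData H D w) ∧ (∀ v, 3 ≤ D.deg v) ∧
      D.nE = D.nV + k ∧ D.nE ≤ 3 * k := by
  obtain ⟨D, w, ⟨S⟩, hdeg⟩ :=
    SubdivisionData.exists_subdivisionData_three_le_deg hconn hbridge (by omega)
  have hD : D.nE = D.nV + k := by have := S.nE_add_nV; omega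
  exact ⟨D, w, ⟨S⟩, hdeg, hD, nE_le_of_three_le_deg hdeg hD⟩

theorem survivalCount_two_le (hconn : H.Connected) (hbridge : ∀ e, H.Survives {e}) (hk : 0 < k)
    (hV : H.nE = H.nV + k) (hE : H.nE = 3 * k * q) :
    H.survivalCount 2 ≤ (3 * k).choose 2 * q ^ 2 := by
  obtain ⟨D, w, ⟨S⟩, -, -, hD⟩ := exists_subdivisionData_of_card hconn hbridge hk hV
  rw [S.survivalCount_eq]
  exact (sum_le_sum_of_subset (filter_subset _ _)).trans
    (sum_powersetCard_two_le hD (S.nE_eq.symm.trans hE))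

theorem exists_subdivisionData_const_of_survivalCount_two_eq (hconn : H.Connected)
    (hbridge : ∀ e, H.Survives {e}) (hk : 0 < k) (hq : 0 < q) (hV : H.nE = H.nV + k)
    (hE : H.nE = 3 * k * q) (heq : H.survivalCount 2 = (3 * k).choose 2 * q ^ 2) :
    ∃ D : Multigraph, Nonempty (SubdivisionData H D fun _ => q) ∧ memDk k D := by
  obtain ⟨D, w, ⟨S⟩, hdeg, hDV, hDE⟩ := exists_subdivisionData_of_card hconn hbridge hk hV
  have hw := S.nE_eq.symm.trans hE
  have hfilter : ∑ s ∈ powersetCard 2 univ with D.Survives s, ∏ e ∈ s, w e =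
      ∑ s ∈ powersetCard 2 univ, ∏ e ∈ s, w e :=
    (sum_le_sum_of_subset (filter_subset _ _)).antisymm <|
      (sum_powersetCard_two_le hDE hw).trans_eq (heq.symm.trans (S.survivalCount_eq 2))
  have hpairs : ∀ F : Finset D.E, #F = 2 → D.Survives F := by
    intro F hF
    by_contra hns
    have hlt := sum_lt_sum_of_subset (f := fun s : Finset D.E => ∏ e ∈ s, w e)
      (filter_subset D.Survives (powersetCard 2 univ))
      (mem_powersetCard_univ.2 hF) (by simp [hns]) (prod_pos fun e _ => S.length_pos e) (by simp)
    exact hlt.ne hfilter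
  obtain ⟨hcard, hconst⟩ := eq_const_of_sum_powersetCard_two_eq hq hDE hw
    (hfilter.symm.trans ((S.survivalCount_eq 2).symm.trans heq))
  obtain rfl : w = fun _ => q := funext hconst
  exact ⟨D, ⟨S⟩, S.connected_iff.1 hconn, deg_eq_three hdeg hDV hcard,
    fun F hF => three_le_card_of_disconnects hpairs (by rw [Multigraph.nE, hcard]; omega) hF, hDV⟩

end

/-! ### Cubic graphs without nontrivial small cuts -/

namespace Multigraph

variable {G : Multigraph}

theorem mem_cutEdges_singleton {v : G.V} {e : G.E} :
    e ∈ G.cutEdges {v} ↔ G.src e = v ∧ G.tgt e ≠ v ∨ G.src e ≠ v ∧ G.tgt e = v := by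
  simp [cutEdges]

theorem cutEdges_symmDiff (A B : Finset G.V) :
    G.cutEdges (symmDiff A B) = symmDiff (G.cutEdges A) (G.cutEdges B) := by
  ext e
  simp only [cutEdges, mem_filter, mem_univ, true_and, mem_symmDiff]
  tauto

theorem survivalCount_add_card_filter_not (G : Multigraph) (i : ℕ) :
    G.survivalCount i + #{F ∈ powersetCard i univ | ¬ G.Survives F} = G.nE.choose i := by
  rw [survivalCount, card_filter_add_card_filter_not, card_powersetCard, card_univ, nE]

/-- The simple graph with the same vertices and the same pairs of distinct adjacent vertices. -/
def toSimpleGraph (G : Multigraph) : SimpleGraph G.V where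
  Adj u v := u ≠ v ∧ G.Adj u v
  symm := ⟨fun _ _ h => ⟨h.1.symm, h.2.imp fun _ he => he.symm⟩⟩

theorem exists_mem_inter_cutEdges {u v : G.V} (huv : G.toSimpleGraph.Adj u v) :
    ∃ e ∈ G.cutEdges {u} ∩ G.cutEdges {v}, ∀ x, x ≠ u → x ≠ v → e ∉ G.cutEdges {x} := by
  obtain ⟨hne, e, he⟩ := huv
  refine ⟨e, ?_, fun x hxu hxv => ?_⟩
  · rw [mem_inter, mem_cutEdges_singleton, mem_cutEdges_singleton]
    grind
  · rw [mem_cutEdges_singleton]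
    grind

theorem IsSimple.degree_toSimpleGraph (hG : G.IsSimple) (v : G.V) :
    G.toSimpleGraph.degree v = #(G.cutEdges {v}) := by
  refine (card_bij (fun e _ => if G.src e = v then G.tgt e else G.src e) (fun e he => ?_)
    (fun e he f hf hef => ?_) fun u hu => ?_).symm
  · rw [mem_cutEdges_singleton] at he
    rw [SimpleGraph.mem_neighborFinset]
    exact ⟨by grind, e, by grind⟩
  · rw [mem_cutEdges_singleton] at he hf
    exact hG.2 e f (by grind)
  · obtain ⟨hvu, e, he⟩ := (SimpleGraph.mem_neighborFinset _ _ _).1 hu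
    refine ⟨e, mem_cutEdges_singleton.2 ?_, ?_⟩ <;> grind

end Multigraph

theorem card_symmDiff_add {α : Type*} (s t : Finset α) :
    #(symmDiff s t) + 2 * #(s ∩ t) = #s + #t := by
  have hs := card_sdiff_add_card_inter s t
  have ht := card_sdiff_add_card_inter t s
  have hst : #(symmDiff s t) = #(s \ t) + #(t \ s) :=
    card_union_of_disjoint disjoint_sdiff_sdiff
  rw [inter_comm] at ht
  omega

namespace memDk

open Multigraph

variable {D : Multigraph} {k : ℕ}

theorem three_le_card_cutEdges (hD : memDk k D) {A : Finset D.V} (hA : A ≠ ∅) (hA' : A ≠ univ) :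
    3 ≤ #(D.cutEdges A) :=
  hD.2.2.1 _ fun h => (Survives.eq_empty_or_eq_univ (not_disconnects_iff.1 (not_not.2 h))
    Subset.rfl).elim hA hA'

theorem two_mul_nE (hD : memDk k D) : 2 * D.nE = 3 * D.nV := by
  rw [← D.sum_deg, sum_congr rfl fun v _ => hD.2.1 v, sum_const, card_univ, smul_eq_mul, mul_comm]
  rfl

theorem singleton_ne_univ (hV : 1 < D.nV) (v : D.V) : ({v} : Finset D.V) ≠ univ := fun h =>
  hV.ne' (by rw [nV, ← card_univ, ← h, card_singleton])

theorem card_cutEdges_singleton (hD : memDk k D) (hV : 1 < D.nV) (v : D.V) :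
    #(D.cutEdges {v}) = 3 := by
  have hdeg := deg_eq_card_cutEdges_add v
  rw [hD.2.1] at hdeg
  have := hD.three_le_card_cutEdges (singleton_ne_empty v) (singleton_ne_univ hV v)
  omega

theorem src_ne_tgt (hD : memDk k D) (hV : 1 < D.nV) (e : D.E) : D.src e ≠ D.tgt e := by
  intro h
  have hdeg := deg_eq_card_cutEdges_add (D.tgt e)
  rw [hD.2.1, hD.card_cutEdges_singleton hV] at hdeg
  have hloop : #{f | D.src f = D.tgt e ∧ D.tgt f = D.tgt e} = 0 := by omega
  exact notMem_empty e ((card_eq_zero.1 hloop).subset (by simp [h]))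

theorem card_inter_cutEdges_le_one (hD : memDk k D) (hV : 2 < D.nV) {u v : D.V} (huv : u ≠ v) :
    #(D.cutEdges {u} ∩ D.cutEdges {v}) ≤ 1 := by
  have hpair : symmDiff {u} {v} = ({u, v} : Finset D.V) := by
    ext x
    simp only [mem_symmDiff, mem_singleton, mem_insert]
    grind
  have hcut := hD.three_le_card_cutEdges (A := {u, v}) (insert_ne_empty _ _) fun h => by
    have := card_pair huv
    rw [h, card_univ, ← nV] at this
    omega
  have hsymm := card_symmDiff_add (D.cutEdges {u}) (D.cutEdges {v})
  rw [← cutEdges_symmDiff, hpair, hD.card_cutEdges_singleton (by omega),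
    hD.card_cutEdges_singleton (by omega)] at hsymm
  omega

theorem isSimple (hD : memDk k D) (hV : 2 < D.nV) : D.IsSimple := by
  have hloop := hD.src_ne_tgt (by omega : 1 < D.nV)
  refine ⟨hloop, fun e f hef => ?_⟩
  refine card_le_one.1 (hD.card_inter_cutEdges_le_one hV (hloop e)) e ?_ f ?_
  all_goals simp only [mem_inter, mem_cutEdges_singleton]
  all_goals have := hloop e; grind

theorem cutEdges_singleton_injective (hD : memDk k D) (hV : 2 < D.nV) :
    Function.Injective fun v => D.cutEdges {v} := by
  intro u v huv
  by_contra hne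
  have h := hD.card_inter_cutEdges_le_one hV hne
  rw [show D.cutEdges {u} = D.cutEdges {v} from huv, inter_self,
    hD.card_cutEdges_singleton (by omega)] at h
  omega

theorem image_cutEdges_singleton_subset (hD : memDk k D) (hV : 1 < D.nV) :
    univ.image (fun v => D.cutEdges {v}) ⊆ (powersetCard 3 univ).filter (¬ D.Survives ·) := by
  intro F hF
  obtain ⟨v, -, rfl⟩ := mem_image.1 hF
  refine mem_filter.2 ⟨mem_powersetCard_univ.2 (hD.card_cutEdges_singleton hV v), fun h => ?_⟩
  exact (h.eq_empty_or_eq_univ Subset.rfl).elim (singleton_ne_empty v) (singleton_ne_univ hV v)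

theorem survivalCount_three_add_nV_le (hD : memDk k D) (hV : 2 < D.nV) :
    D.survivalCount 3 + D.nV ≤ D.nE.choose 3 := by
  have hcard := card_le_card (hD.image_cutEdges_singleton_subset (by omega))
  rw [card_image_of_injective _ (hD.cutEdges_singleton_injective hV), card_univ, ← nV] at hcard
  have := survivalCount_add_card_filter_not D 3
  omega

theorem exists_eq_cutEdges_singleton (hD : memDk k D) (hV : 2 < D.nV)
    (heq : D.survivalCount 3 + D.nV = D.nE.choose 3) {F : Finset D.E} (hF : #F = 3)
    (hns : ¬ D.Survives F) : ∃ v, F = D.cutEdges {v} := by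
  have himage := eq_of_subset_of_card_le (hD.image_cutEdges_singleton_subset (by omega)) <| by
    rw [card_image_of_injective _ (hD.cutEdges_singleton_injective hV), card_univ, ← nV]
    have := survivalCount_add_card_filter_not D 3
    omega
  have hmem := himage.symm.subset (mem_filter.2 ⟨mem_powersetCard_univ.2 hF, hns⟩)
  obtain ⟨v, -, rfl⟩ := mem_image.1 hmem
  exact ⟨v, rfl⟩

theorem isRegularOfDegree (hD : memDk k D) (hV : 2 < D.nV) :
    D.toSimpleGraph.IsRegularOfDegree 3 := fun v => by
  rw [(hD.isSimple hV).degree_toSimpleGraph, hD.card_cutEdges_singleton (by omega)]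

theorem card_cutEdges_triangle_le (hD : memDk k D) (hV : 2 < D.nV) {a b c : D.V}
    (hab : D.toSimpleGraph.Adj a b) (hac : D.toSimpleGraph.Adj a c)
    (hbc : D.toSimpleGraph.Adj b c) : #(D.cutEdges (symmDiff (symmDiff {a} {b}) {c})) ≤ 3 := by
  obtain ⟨e, he, -⟩ := exists_mem_inter_cutEdges hab
  obtain ⟨f, hf, hf'⟩ := exists_mem_inter_cutEdges hac
  obtain ⟨g, hg, hg'⟩ := exists_mem_inter_cutEdges hbc
  have hfb := hf' b hab.ne.symm hbc.ne
  have hga := hg' a hab.ne hac.ne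
  simp only [mem_inter] at he hf hg
  have hpair : {f, g} ⊆ symmDiff (D.cutEdges {a}) (D.cutEdges {b}) ∩ D.cutEdges {c} := by
    simp only [insert_subset_iff, singleton_subset_iff, mem_inter, mem_symmDiff]
    tauto
  have hfg : f ≠ g := fun h => hga (h ▸ hf.1)
  have htwo := card_le_card hpair
  rw [card_pair hfg] at htwo
  have hone : 0 < #(D.cutEdges {a} ∩ D.cutEdges {b}) := card_pos.2 ⟨e, mem_inter.2 he⟩
  have hsymm := card_symmDiff_add (D.cutEdges {a}) (D.cutEdges {b})
  have hsymm' := card_symmDiff_add (symmDiff (D.cutEdges {a}) (D.cutEdges {b})) (D.cutEdges {c})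
  simp only [hD.card_cutEdges_singleton (by omega : 1 < D.nV)] at hsymm hsymm'
  rw [cutEdges_symmDiff, cutEdges_symmDiff]
  omega

theorem cliqueFree_three (hD : memDk k D) (hV : 4 < D.nV)
    (heq : D.survivalCount 3 + D.nV = D.nE.choose 3) : D.toSimpleGraph.CliqueFree 3 := by
  intro s hs
  obtain ⟨a, b, c, hab, hac, hbc, -⟩ := SimpleGraph.is3Clique_iff.1 hs
  have htriple : symmDiff (symmDiff {a} {b}) {c} = ({a, b, c} : Finset D.V) := by
    ext x
    simp only [mem_symmDiff, mem_singleton, mem_insert]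
    have := hab.ne; have := hac.ne; have := hbc.ne
    grind
  have hcard : #({a, b, c} : Finset D.V) = 3 :=
    card_eq_three.2 ⟨a, b, c, hab.ne, hac.ne, hbc.ne, rfl⟩
  have hne : ({a, b, c} : Finset D.V) ≠ ∅ := insert_ne_empty _ _
  have huniv (A : Finset D.V) (hA : #A ≤ 4) : A ≠ univ := fun h => by
    rw [h, card_univ, ← nV] at hA
    omega
  have hproper := huniv {a, b, c} (by omega)
  have hcut := (hD.card_cutEdges_triangle_le (by omega) hab hac hbc).antisymm
    (htriple ▸ hD.three_le_card_cutEdges hne hproper)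
  rw [htriple] at hcut
  obtain ⟨t, ht⟩ := hD.exists_eq_cutEdges_singleton (by omega) heq hcut fun h =>
    (h.eq_empty_or_eq_univ Subset.rfl).elim hne hproper
  have hempty : D.cutEdges (symmDiff {a, b, c} {t}) = ∅ := by
    rw [cutEdges_symmDiff, ht, symmDiff_self, bot_eq_empty]
  obtain h | h := (connected_iff_survives_empty.1 hD.1).eq_empty_or_eq_univ hempty.subset
  · rw [← bot_eq_empty, symmDiff_eq_bot] at h
    rw [h, card_singleton] at hcard
    omega
  · refine huniv _ ?_ h
    have := card_symmDiff_add {a, b, c} {t}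
    rw [hcard, card_singleton] at this
    omega

end memDk

/-! ### Triangle-free cubic graphs on eight vertices -/

namespace CubicGraph

variable {V : Type*} {G : SimpleGraph V}

theorem exists_moebius_of_adj {v x b c y d a z : V} (hnodup : [v, x, b, c, y, d, a, z].Nodup)
    (hvx : G.Adj v x) (hxb : G.Adj x b) (hbc : G.Adj b c) (hcy : G.Adj c y) (hyd : G.Adj y d)
    (hda : G.Adj d a) (haz : G.Adj a z) (hzv : G.Adj z v)
    (hvy : G.Adj v y) (hxd : G.Adj x d) (hba : G.Adj b a) (hcz : G.Adj c z) :
    ∃ f : Fin 8 → V, f.Injective ∧ (∀ i, G.Adj (f i) (f (i + 1))) ∧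
      ∀ i, G.Adj (f i) (f (i + 4)) := by
  refine ⟨![v, x, b, c, y, d, a, z], List.nodup_ofFn.1 (by simpa using hnodup), ?_, ?_⟩
  · intro i
    fin_cases i <;> assumption
  · intro i
    fin_cases i <;> first | assumption | (apply SimpleGraph.Adj.symm; assumption)

theorem exists_cube_of_adj {v r x y z p q s : V} (hnodup : [v, p, q, s, r, x, y, z].Nodup)
    (hvx : G.Adj v x) (hvy : G.Adj v y) (hvz : G.Adj v z)
    (hpr : G.Adj p r) (hpy : G.Adj p y) (hpz : G.Adj p z)
    (hqr : G.Adj q r) (hqx : G.Adj q x) (hqz : G.Adj q z)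
    (hsr : G.Adj s r) (hsx : G.Adj s x) (hsy : G.Adj s y) :
    ∃ f g : Fin 4 → V, (Sum.elim f g).Injective ∧ ∀ i j, i ≠ j → G.Adj (f i) (g j) := by
  obtain ⟨hleft, hright, hdisj⟩ := (List.nodup_append (l₁ := [v, p, q, s])).1 hnodup
  refine ⟨![v, p, q, s], ![r, x, y, z], ?_, fun i j hij => ?_⟩
  · refine (List.nodup_ofFn.1 (by simpa using hleft)).sumElim
      (List.nodup_ofFn.1 (by simpa using hright)) fun i j => hdisj _ ?_ _ ?_
    · fin_cases i <;> simp
    · fin_cases j <;> simp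
  · fin_cases i <;> fin_cases j <;> first | assumption | exact absurd rfl hij

variable [Fintype V]

theorem exists_neighbors_of_adj (hG : G.IsRegularOfDegree 3) {v x : V} (hvx : G.Adj v x) :
    ∃ y z, [x, y, z].Nodup ∧ ∀ u, G.Adj v u ↔ u = x ∨ u = y ∨ u = z := by
  have hcard : #((G.neighborFinset v).erase x) = 2 := by
    rw [card_erase_of_mem ((G.mem_neighborFinset v x).2 hvx), G.card_neighborFinset_eq_degree, hG]
  obtain ⟨y, z, hyz, hset⟩ := card_eq_two.1 hcard
  have hmem (u) : u ≠ x ∧ G.Adj v u ↔ u = y ∨ u = z := by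
    simpa using Finset.ext_iff.1 hset u
  refine ⟨y, z, ?_, fun u => ?_⟩
  · have := hmem y; have := hmem z
    simp only [List.nodup_cons, List.mem_cons]
    grind
  · have := hmem u
    grind

theorem exists_cons_nodup {l : List V} (hl : l.Nodup) (hlen : l.length < Fintype.card V) :
    ∃ d, (d :: l).Nodup := by
  obtain ⟨d, hd⟩ := exists_mem_notMem_of_card_lt_card
    (s := l.toFinset) (t := univ) (by rwa [List.toFinset_card_of_nodup hl, card_univ])
  exact ⟨d, List.nodup_cons.2 ⟨by simpa using hd.2, hl⟩⟩

theorem sum_map_adj_eq_three (hG : G.IsRegularOfDegree 3) {l : List V} (hl : l.Nodup)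
    (hlen : l.length = Fintype.card V) (u : V) :
    (l.map fun v => if G.Adj u v then 1 else 0).sum = 3 := by
  have huniv : l.toFinset = univ :=
    eq_univ_of_card _ (by rw [List.toFinset_card_of_nodup hl, hlen])
  rw [← List.sum_toFinset _ hl, huniv, ← card_filter, ← hG u, ← G.card_neighborFinset_eq_degree]
  congr 1
  ext v
  simp

theorem exists_eight_labels (hcard : Fintype.card V = 8)
    (hG : G.IsRegularOfDegree 3) (htri : ∀ u v w, G.Adj u v → G.Adj v w → ¬ G.Adj u w)
    {v b x : V} (hx : ∀ u, G.Adj v u ∧ G.Adj b u ↔ u = x) (hvb : v ≠ b) (hnadj : ¬ G.Adj v b) :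
    ∃ y z a c d, [v, x, b, c, y, d, a, z].Nodup ∧ (∀ u, G.Adj v u ↔ u = x ∨ u = y ∨ u = z) ∧
      (∀ u, G.Adj b u ↔ u = x ∨ u = a ∨ u = c) ∧ G.Adj x d := by
  obtain ⟨hvx, hbx⟩ := (hx x).2 rfl
  obtain ⟨y, z, hyz, hv⟩ := exists_neighbors_of_adj hG hvx
  obtain ⟨a, c, hac, hb⟩ := exists_neighbors_of_adj hG hbx
  have hnodup : [v, x, b, c, y, a, z].Nodup := by
    have := hx y; have := hx z
    have := hv y; have := hv z
    have := hb a; have := hb c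
    simp only [List.nodup_cons, List.mem_cons, List.not_mem_nil, List.nodup_nil] at hyz hac ⊢
    grind [G.irrefl]
  obtain ⟨d, hd⟩ := exists_cons_nodup hnodup (by simp [hcard])
  have hperm : [d, v, x, b, c, y, a, z].Perm [v, x, b, c, y, d, a, z] :=
    List.perm_middle (l₁ := [v, x, b, c, y]).symm
  refine ⟨y, z, a, c, d, hperm.nodup_iff.1 hd, hv, hb, ?_⟩
  have := sum_map_adj_eq_three hG hd (by simp [hcard]) x
  simp only [List.map_cons, List.map_nil, List.sum_cons, List.sum_nil] at this
  simp only [List.nodup_cons, List.mem_cons, List.not_mem_nil, List.nodup_nil] at hd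
  grind [G.irrefl, G.adj_comm]

theorem exists_moebius_of_labels (hcard : Fintype.card V = 8) (hG : G.IsRegularOfDegree 3)
    (htri : ∀ u v w, G.Adj u v → G.Adj v w → ¬ G.Adj u w) {v x b c y d a z : V}
    (hnodup : [v, x, b, c, y, d, a, z].Nodup) (hv : ∀ u, G.Adj v u ↔ u = x ∨ u = y ∨ u = z)
    (hb : ∀ u, G.Adj b u ↔ u = x ∨ u = a ∨ u = c)
    (hxd : G.Adj x d) (hyd : G.Adj y d) (had : G.Adj a d) :
    ∃ f : Fin 8 → V, f.Injective ∧ (∀ i, G.Adj (f i) (f (i + 1))) ∧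
      ∀ i, G.Adj (f i) (f (i + 4)) := by
  have hdeg := sum_map_adj_eq_three hG hnodup (by simp [hcard])
  have hnodup' := hnodup
  simp only [List.map_cons, List.map_nil, List.sum_cons, List.sum_nil] at hdeg
  simp only [List.nodup_cons, List.mem_cons, List.not_mem_nil, List.nodup_nil] at hnodup'
  obtain ⟨hvx, hvy, hvz⟩ : G.Adj v x ∧ G.Adj v y ∧ G.Adj v z := by simp [hv]
  obtain ⟨hbx, hba, hbc⟩ : G.Adj b x ∧ G.Adj b a ∧ G.Adj b c := by simp [hb]
  have hya : ¬ G.Adj y a := htri y d a hyd had.symm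
  have hcy : G.Adj c y := by
    have := hdeg y; have := hb y; have := htri v y
    grind [G.irrefl, G.adj_comm]
  have haz : G.Adj a z := by
    have := hdeg a; have := hv a; have := htri b a
    grind [G.irrefl, G.adj_comm]
  have hcz : G.Adj c z := by
    have := hdeg d; have := hdeg z; have := hb z; have := htri v z
    grind [G.irrefl, G.adj_comm]
  exact exists_moebius_of_adj hnodup hvx hbx.symm hbc hcy hyd had.symm haz hvz.symm hvy hxd hba hcz

theorem exists_moebius_of_unique_common_neighbor (hcard : Fintype.card V = 8)
    (hG : G.IsRegularOfDegree 3) (htri : ∀ u v w, G.Adj u v → G.Adj v w → ¬ G.Adj u w)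
    {v b x : V} (hx : ∀ u, G.Adj v u ∧ G.Adj b u ↔ u = x) (hvb : v ≠ b) (hnadj : ¬ G.Adj v b) :
    ∃ f : Fin 8 → V, f.Injective ∧ (∀ i, G.Adj (f i) (f (i + 1))) ∧
      ∀ i, G.Adj (f i) (f (i + 4)) := by
  obtain ⟨y, z, a, c, d, hnodup, hv, hb, hxd⟩ := exists_eight_labels hcard hG htri hx hvb hnadj
  have hdeg := sum_map_adj_eq_three hG hnodup (by simp [hcard])
  have hnodup' := hnodup
  simp only [List.map_cons, List.map_nil, List.sum_cons, List.sum_nil] at hdeg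
  simp only [List.nodup_cons, List.mem_cons, List.not_mem_nil, List.nodup_nil] at hnodup'
  have hd (u) (_ : u = y ∨ u = z ∨ u = a ∨ u = c) (hud : ¬ G.Adj u d) :
      ((u = y ∨ u = z) → G.Adj u a ∧ G.Adj u c) ∧ ((u = a ∨ u = c) → G.Adj u y ∧ G.Adj u z) := by
    have := hdeg u; have := hx u; have := htri v u; have := htri b u
    have := hv y; have := hv z; have := hb a; have := hb c
    grind [G.irrefl, G.adj_comm]
  -- Besides `x`, the eighth vertex `d` is adjacent to one of `y`, `z` and to one of `a`, `c`.
  have hyz : G.Adj y d ∨ G.Adj z d := by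
    by_contra! h
    have := hd y (by simp) h.1
    have := hd z (by simp) h.2
    have := hdeg d
    have := hdeg a
    have := hb a
    grind [G.irrefl, G.adj_comm]
  have hac : G.Adj a d ∨ G.Adj c d := by
    by_contra! h
    have := hd a (by simp) h.1
    have := hd c (by simp) h.2
    have := hdeg d
    have := hdeg y
    have := hv y
    grind [G.irrefl, G.adj_comm]
  have hv' (u) : G.Adj v u ↔ u = x ∨ u = z ∨ u = y := by rw [hv, or_comm (a := u = y)]
  have hb' (u) : G.Adj b u ↔ u = x ∨ u = c ∨ u = a := by rw [hb, or_comm (a := u = a)]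
  rcases hyz with hy | hz <;> rcases hac with ha | hc
  · exact exists_moebius_of_labels hcard hG htri hnodup hv hb hxd hy ha
  · exact exists_moebius_of_labels (c := a) (z := z) hcard hG htri (by grind) hv hb' hxd hy hc
  · exact exists_moebius_of_labels (c := c) (z := y) hcard hG htri (by grind) hv' hb hxd hz ha
  · exact exists_moebius_of_labels (c := a) (z := y) hcard hG htri (by grind) hv' hb' hxd hz hc

theorem exists_disjoint_neighbors (hcard : Fintype.card V = 8) (hG : G.IsRegularOfDegree 3)
    (hcommon : ∀ v b x, v ≠ b → ¬ G.Adj v b → ¬ ∀ u, G.Adj v u ∧ G.Adj b u ↔ u = x) (v : V) :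
    ∃ r, r ≠ v ∧ ¬ G.Adj v r ∧ ∀ u, G.Adj v u → ¬ G.Adj r u := by
  -- Otherwise each of the four non-neighbours of `v` sends two edges into the neighbourhood of `v`,
  -- which can receive only six.
  by_contra! hr
  set S := (insert v (G.neighborFinset v))ᶜ with hS
  have hScard : #S = 4 := by
    rw [card_compl, card_insert_of_notMem (by simp), G.card_neighborFinset_eq_degree, hG, hcard]
  have hmemS (b) : b ∈ S ↔ v ≠ b ∧ ¬ G.Adj v b := by simp [hS, eq_comm]
  have habove : ∀ b ∈ S, 2 ≤ #((G.neighborFinset v).bipartiteAbove G.Adj b) := by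
    intro b hb
    obtain ⟨hvb, hnadj⟩ := (hmemS b).1 hb
    obtain ⟨u, hvu, hbu⟩ := hr b hvb.symm hnadj
    have hpos : 0 < #((G.neighborFinset v).bipartiteAbove G.Adj b) :=
      card_pos.2 ⟨u, by simp [bipartiteAbove, hvu, hbu]⟩
    have hone : #((G.neighborFinset v).bipartiteAbove G.Adj b) ≠ 1 := by
      intro h
      obtain ⟨x, hx⟩ := card_eq_one.1 h
      exact hcommon v b x hvb hnadj fun u => by
        simpa [bipartiteAbove] using Finset.ext_iff.1 hx u
    lia
  have hbelow : ∀ u ∈ G.neighborFinset v, #(S.bipartiteBelow G.Adj u) ≤ 2 := by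
    intro u hu
    have huv : G.Adj u v := ((G.mem_neighborFinset v u).1 hu).symm
    have hsub : S.bipartiteBelow G.Adj u ⊆ (G.neighborFinset u).erase v := fun b hb => by
      obtain ⟨hbS, hbu⟩ := mem_filter.1 hb
      simpa using ⟨((hmemS b).1 hbS).1.symm, hbu.symm⟩
    refine (card_le_card hsub).trans ?_
    rw [card_erase_of_mem (by simpa using huv), G.card_neighborFinset_eq_degree, hG]
  have := card_mul_le_card_mul G.Adj habove hbelow
  rw [hScard, G.card_neighborFinset_eq_degree, hG] at this
  lia

theorem exists_cube_of_labels (hcard : Fintype.card V = 8) (hG : G.IsRegularOfDegree 3)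
    (htri : ∀ u v w, G.Adj u v → G.Adj v w → ¬ G.Adj u w) {v r x y z p q s : V}
    (hnodup : [v, p, q, s, r, x, y, z].Nodup) (hv : ∀ u, G.Adj v u ↔ u = x ∨ u = y ∨ u = z)
    (hr : ∀ u, G.Adj r u ↔ u = p ∨ u = q ∨ u = s) (hxp : ¬ G.Adj x p) :
    ∃ f g : Fin 4 → V, (Sum.elim f g).Injective ∧ ∀ i j, i ≠ j → G.Adj (f i) (g j) := by
  have hdeg := sum_map_adj_eq_three hG hnodup (by simp [hcard])
  simp only [List.map_cons, List.map_nil, List.sum_cons, List.sum_nil] at hdeg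
  have hnodup' := hnodup
  simp only [List.nodup_cons, List.mem_cons, List.not_mem_nil, List.nodup_nil] at hnodup'
  obtain ⟨hqx, hsx⟩ : G.Adj q x ∧ G.Adj s x := by
    have := hdeg x; have := htri v x; have := hr x
    grind [G.irrefl, G.adj_comm]
  obtain ⟨hpy, hpz⟩ : G.Adj p y ∧ G.Adj p z := by
    have := hdeg p; have := htri r p; have := hv p
    grind [G.irrefl, G.adj_comm]
  obtain ⟨hvx, hvy, hvz⟩ : G.Adj v x ∧ G.Adj v y ∧ G.Adj v z := by simp [hv]
  obtain ⟨hpr, hqr, hsr⟩ : G.Adj p r ∧ G.Adj q r ∧ G.Adj s r := by simp [G.adj_comm _ r, hr]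
  have hqs : G.Adj q z ∧ G.Adj s y ∨ G.Adj q y ∧ G.Adj s z := by
    have := hdeg q; have := hdeg s; have := htri r q; have := htri r s
    have := hdeg y; have := htri v y
    grind [G.irrefl, G.adj_comm]
  rcases hqs with ⟨hqz, hsy⟩ | ⟨hqy, hsz⟩
  · exact exists_cube_of_adj hnodup hvx hvy hvz hpr hpy hpz hqr hqx hqz hsr hsx hsy
  · exact exists_cube_of_adj (q := s) (s := q) (by grind) hvx hvy hvz hpr hpy hpz hsr hsx hsz
      hqr hqx hqy

theorem exists_cube_of_disjoint_neighbors (hcard : Fintype.card V = 8)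
    (hG : G.IsRegularOfDegree 3) (htri : ∀ u v w, G.Adj u v → G.Adj v w → ¬ G.Adj u w)
    {v r : V} (hrv : r ≠ v) (hnadj : ¬ G.Adj v r) (hdisj : ∀ u, G.Adj v u → ¬ G.Adj r u) :
    ∃ f g : Fin 4 → V, (Sum.elim f g).Injective ∧ ∀ i j, i ≠ j → G.Adj (f i) (g j) := by
  obtain ⟨x, hvx⟩ : ∃ x, G.Adj v x := by
    rw [← SimpleGraph.degree_pos_iff_exists_adj, hG]
    exact three_pos
  obtain ⟨y, z, hyz, hv⟩ := exists_neighbors_of_adj hG hvx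
  obtain ⟨p, hrp, hpx⟩ : ∃ p, G.Adj r p ∧ ¬ G.Adj x p := by
    have hcard_eq : #(G.neighborFinset r) = #(G.neighborFinset x) := by
      rw [G.card_neighborFinset_eq_degree, G.card_neighborFinset_eq_degree, hG, hG]
    by_contra! h
    have heq : G.neighborFinset r = G.neighborFinset x :=
      eq_of_subset_of_card_le (fun u hu => by simpa using h u (by simpa using hu)) hcard_eq.ge
    have : v ∈ G.neighborFinset r := heq ▸ (G.mem_neighborFinset x v).2 hvx.symm
    exact hnadj ((G.mem_neighborFinset r v).1 this).symm
  obtain ⟨q, s, hqs, hr⟩ := exists_neighbors_of_adj hG hrp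
  have hnodup : [v, p, q, s, r, x, y, z].Nodup := by
    have := hdisj x; have := hdisj y; have := hdisj z
    have := hv r; have := hr v; have := hv v; have := hr r
    simp only [List.nodup_cons, List.mem_cons, List.not_mem_nil, List.nodup_nil] at hyz hqs ⊢
    grind [G.irrefl, G.adj_comm]
  exact exists_cube_of_labels hcard hG htri hnodup hv hr hpx

theorem exists_moebius_or_cube (hcard : Fintype.card V = 8) (hG : G.IsRegularOfDegree 3)
    (hfree : G.CliqueFree 3) :
    (∃ f : Fin 8 → V, f.Injective ∧ (∀ i, G.Adj (f i) (f (i + 1))) ∧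
      ∀ i, G.Adj (f i) (f (i + 4))) ∨
    ∃ f g : Fin 4 → V, (Sum.elim f g).Injective ∧ ∀ i j, i ≠ j → G.Adj (f i) (g j) := by
  have htri (u v w) (huv : G.Adj u v) (hvw : G.Adj v w) : ¬ G.Adj u w := fun huw =>
    hfree _ (SimpleGraph.is3Clique_triple_iff.2 ⟨huv, huw, hvw⟩)
  by_cases hcommon : ∀ v b x, v ≠ b → ¬ G.Adj v b → ¬ ∀ u, G.Adj v u ∧ G.Adj b u ↔ u = x
  · have : Nonempty V := Fintype.card_pos_iff.1 (by lia)
    obtain ⟨v⟩ := this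
    obtain ⟨r, hrv, hnadj, hdisj⟩ := exists_disjoint_neighbors hcard hG hcommon v
    exact .inr (exists_cube_of_disjoint_neighbors hcard hG htri hrv hnadj hdisj)
  · push Not at hcommon
    obtain ⟨v, b, x, hvb, hnadj, hx⟩ := hcommon
    exact .inl (exists_moebius_of_unique_common_neighbor hcard hG htri hx hvb hnadj)

end CubicGraph

theorem isIso_of_injective_of_adj {D D' : Multigraph} (hD : D.IsSimple) (hV : D.nV = D'.nV)
    (hE : D.nE = D'.nE) {φ : D.V → D'.V} (hφ : φ.Injective)
    (hadj : ∀ e, D'.Adj (φ (D.src e)) (φ (D.tgt e))) : IsIso D D' := by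
  choose ψ hψ using hadj
  have hψ_inj : ψ.Injective := by
    intro e f hef
    apply hD.2
    have he := hψ e
    have hf := hψ f
    rw [← hef] at hf
    grind [Function.Injective]
  exact ⟨Equiv.ofBijective φ ((Fintype.bijective_iff_injective_and_card φ).2 ⟨hφ, hV⟩),
    Equiv.ofBijective ψ ((Fintype.bijective_iff_injective_and_card ψ).2 ⟨hψ_inj, hE⟩), hψ⟩

/-- The cube graph, as the complete bipartite graph `K_{4,4}` minus a perfect matching: the
vertex `Sum.inl i` is antipodal to `Sum.inr i`. -/
def cube : Multigraph where
  V := Fin 4 ⊕ Fin 4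
  E := Fin 4 × Fin 3
  src e := Sum.inl e.1
  tgt e := Sum.inr (e.1.succAbove e.2)

theorem wagner_isSimple : wagner.IsSimple := by
  unfold Multigraph.IsSimple wagner
  decide

theorem cube_isSimple : cube.IsSimple := by
  unfold Multigraph.IsSimple cube
  decide

theorem memDk.isIso_wagner_or_cube {D : Multigraph} (hD : memDk 4 D)
    (heq : D.survivalCount 3 + D.nV = D.nE.choose 3) : IsIso wagner D ∨ IsIso cube D := by
  have hVE := hD.two_mul_nE
  have hk : D.nE = D.nV + 4 := hD.2.2.2
  have hV : D.nV = 8 := by lia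
  have hE : D.nE = 12 := by lia
  obtain ⟨f, hf, hrail, hrung⟩ | ⟨f, g, hfg, hadj⟩ := CubicGraph.exists_moebius_or_cube hV
    (hD.isRegularOfDegree (by lia)) (hD.cliqueFree_three (by lia) heq)
  · refine .inl (isIso_of_injective_of_adj wagner_isSimple hV.symm hE.symm hf ?_)
    rintro (i | j)
    · exact (hrail i).2
    · fin_cases j <;> exact (hrung _).2
  · refine .inr (isIso_of_injective_of_adj cube_isSimple hV.symm hE.symm hfg fun e => ?_)
    exact (hadj _ _ (Fin.succAbove_ne _ _).symm).2

/-! ### Counting survivors by deletion and contraction -/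

namespace Multigraph

variable {G : Multigraph}

/-- The edge set `S` connects `G` after the vertices with equal label under `c` are identified. -/
def ConnModulo (G : Multigraph) {L : Type} (c : G.V → L) (S : Finset G.E) : Prop :=
  ∀ P : G.V → Prop, (∀ u v, c u = c v → (P u ↔ P v)) →
    (∀ e ∈ S, P (G.src e) ↔ P (G.tgt e)) → ∀ u v, P u → P v

/-- The labelling `c` after the classes of the two ends of the edge `e` are merged. -/
def mergeEnds (G : Multigraph) {L : Type} [DecidableEq L] (c : G.V → L) (e : G.E) : G.V → L :=
  fun v => if c v = c (G.src e) then c (G.tgt e) else c v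

theorem connModulo_id {S : Finset G.E} : G.ConnModulo id S ↔ G.ConnOn S := by
  rw [connOn_iff_forall_coloring]
  simp +contextual [ConnModulo]

theorem connModulo_empty {L : Type} {c : G.V → L} :
    G.ConnModulo c ∅ ↔ ∀ u v, c u = c v := by
  refine ⟨fun h u v => ?_, fun h P hP _ u v => (hP u v (h u v)).1⟩
  exact (h (fun x => c x = c u) (fun x y hxy => by rw [hxy]) (by simp) u v rfl).symm

theorem connModulo_insert {L : Type} [DecidableEq L] {c : G.V → L} {S : Finset G.E} {e : G.E} :
    G.ConnModulo c (insert e S) ↔ G.ConnModulo (G.mergeEnds c e) S := by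
  refine forall_congr' fun P => ?_
  have hclasses : (∀ u v, G.mergeEnds c e u = G.mergeEnds c e v → (P u ↔ P v)) ↔
      (∀ u v, c u = c v → (P u ↔ P v)) ∧ (P (G.src e) ↔ P (G.tgt e)) := by
    unfold mergeEnds
    refine ⟨fun h => ⟨fun u v huv => h u v (by rw [huv]), h _ _ (by simp)⟩, fun h u v huv => ?_⟩
    grind
  rw [hclasses, forall_mem_insert]
  tauto

/-- The sum of `∏ e ∈ F, w e` over the `k`-element subsets `F` of the list for which the other
edges of the list connect `G` modulo `c`, computed by contracting or deleting the first edge. -/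
def deletionContraction (G : Multigraph) [DecidableEq G.V] (w : G.E → ℕ) :
    List G.E → ℕ → (G.V → G.V) → ℕ
  | [], 0, c => if ∀ u v, c u = c v then 1 else 0
  | [], _ + 1, _ => 0
  | e :: l, 0, c => deletionContraction G w l 0 (G.mergeEnds c e)
  | e :: l, k + 1, c =>
    deletionContraction G w l (k + 1) (G.mergeEnds c e) +
      w e * deletionContraction G w l k c

theorem deletionContraction_eq_sum [DecidableEq G.V] (w : G.E → ℕ) {l : List G.E} (hl : l.Nodup)
    (k : ℕ) (c : G.V → G.V) :
    G.deletionContraction w l k c = ∑ F ∈ l.toFinset.powerset,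
      if #F = k ∧ G.ConnModulo c (l.toFinset \ F) then ∏ e ∈ F, w e else 0 := by
  induction l generalizing k c with
  | nil => cases k <;> simp [deletionContraction, connModulo_empty]
  | cons e l ih =>
    obtain ⟨hel, hl⟩ := List.nodup_cons.1 hl
    have hel : e ∉ l.toFinset := by simpa using hel
    have hkeep {F} (hF : F ∈ l.toFinset.powerset) :
        G.ConnModulo c (insert e l.toFinset \ F) ↔
          G.ConnModulo (G.mergeEnds c e) (l.toFinset \ F) := by
      rw [insert_sdiff_of_notMem _ fun h => hel (mem_powerset.1 hF h), connModulo_insert]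
    have hdelete {F} (hF : F ∈ l.toFinset.powerset) :
        #(insert e F) = #F + 1 ∧ insert e l.toFinset \ insert e F = l.toFinset \ F ∧
          ∏ f ∈ insert e F, w f = w e * ∏ f ∈ F, w f := by
      have heF : e ∉ F := fun h => hel (mem_powerset.1 hF h)
      exact ⟨card_insert_of_notMem heF,
        by rw [insert_sdiff_insert, sdiff_insert_of_notMem hel], prod_insert heF⟩
    rw [List.toFinset_cons, sum_powerset_insert hel]
    cases k with
    | zero =>
      rw [deletionContraction, ih hl, ← add_zero (∑ _ ∈ _, _)]
      congr 1
      · exact sum_congr rfl fun F hF => by rw [hkeep hF]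
      · exact (sum_eq_zero fun F hF => by simp [(hdelete hF).1]).symm
    | succ k =>
      rw [deletionContraction, ih hl, ih hl, mul_sum]
      congr 1
      · exact sum_congr rfl fun F hF => by rw [hkeep hF]
      · refine sum_congr rfl fun F hF => ?_
        obtain ⟨h1, h2, h3⟩ := hdelete hF
        simp only [h1, h2, h3, Nat.add_right_cancel_iff, mul_ite, mul_zero]

theorem deletionContraction_of_forall_eq [DecidableEq G.V] {w : G.E → ℕ} {q : ℕ}
    {l : List G.E} (hw : ∀ e ∈ l, w e = q) (k : ℕ) (c : G.V → G.V) :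
    G.deletionContraction w l k c = q ^ k * G.deletionContraction (fun _ => 1) l k c := by
  induction l generalizing k c with
  | nil => cases k <;> simp [deletionContraction]
  | cons e l ih =>
    have ih := ih fun f hf => hw f (List.mem_cons_of_mem e hf)
    cases k with
    | zero => simpa [deletionContraction] using ih 0 _
    | succ k =>
      rw [deletionContraction, deletionContraction, ih, ih, hw e List.mem_cons_self]
      ring

theorem sum_survives_eq_deletionContraction [DecidableEq G.V] (w : G.E → ℕ) {l : List G.E}
    (hl : l.Nodup) (huniv : ∀ e, e ∈ l) (k : ℕ) :
    ∑ F ∈ powersetCard k univ with G.Survives F, ∏ e ∈ F, w e =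
      G.deletionContraction w l k id := by
  have hfinset : l.toFinset = univ := eq_univ_of_forall fun e => List.mem_toFinset.2 (huniv e)
  rw [deletionContraction_eq_sum w hl, hfinset, powersetCard_eq_filter, filter_filter, sum_filter]
  simp only [connModulo_id, Survives, compl_eq_univ_sdiff]
  congr!

theorem survivalCount_eq_deletionContraction [DecidableEq G.V] {l : List G.E} (hl : l.Nodup)
    (huniv : ∀ e, e ∈ l) (k : ℕ) :
    G.survivalCount k = G.deletionContraction (fun _ => 1) l k id := by
  rw [← sum_survives_eq_deletionContraction _ hl huniv, survivalCount, card_eq_sum_ones]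
  simp only [prod_const_one]

end Multigraph

theorem SubdivisionData.survivalCount_eq_deletionContraction {H D : Multigraph} {w : D.E → ℕ}
    [DecidableEq D.V] (S : SubdivisionData H D w) {l : List D.E} (hl : l.Nodup)
    (huniv : ∀ e, e ∈ l) (k : ℕ) : H.survivalCount k = D.deletionContraction w l k id := by
  rw [S.survivalCount_eq, ← D.sum_survives_eq_deletionContraction w hl huniv]

/-! ### The Wagner graph and the cube -/

section

open Multigraph

instance : DecidableEq wagner.V := inferInstanceAs (DecidableEq (Fin 8))

instance : DecidableEq wagner.E := inferInstanceAs (DecidableEq (Fin 8 ⊕ Fin 4))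

instance : DecidableEq cube.V := inferInstanceAs (DecidableEq (Fin 4 ⊕ Fin 4))

instance : DecidableEq cube.E := inferInstanceAs (DecidableEq (Fin 4 × Fin 3))

/-- A rail of the Wagner graph. -/
abbrev wagnerRail : wagner.E := Sum.inl (0 : Fin 8)

/-- A rung of the Wagner graph adjacent to `wagnerRail`. -/
abbrev wagnerRung : wagner.E := Sum.inr (0 : Fin 4)

/-- The edges of the Wagner graph other than `wagnerRail` and `wagnerRung`. -/
def wagnerOtherEdges : List wagner.E :=
  ((List.finRange 7).map fun i => Sum.inl i.succ) ++ (List.finRange 3).map fun j => Sum.inr j.succ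

/-- The edges of the Wagner graph, as a list. -/
def wagnerEdges : List wagner.E := wagnerRail :: wagnerRung :: wagnerOtherEdges

theorem nodup_wagnerEdges : wagnerEdges.Nodup := by
  decide

theorem mem_wagnerEdges : ∀ e, e ∈ wagnerEdges := by
  decide

/-- The edges of the cube, as a list. -/
def cubeEdges : List cube.E := List.finRange 4 ×ˢ List.finRange 3

theorem nodup_cubeEdges : cubeEdges.Nodup := by
  decide

theorem mem_cubeEdges : ∀ e, e ∈ cubeEdges := by
  decide

theorem wagner_nV : wagner.nV = 8 := rfl

theorem wagner_nE : wagner.nE = 12 := rfl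

theorem survivalCount_wagner_one : wagner.survivalCount 1 = 12 := by
  rw [survivalCount_eq_deletionContraction nodup_wagnerEdges mem_wagnerEdges]
  decide +kernel

theorem survivalCount_wagner_two : wagner.survivalCount 2 = 66 := by
  rw [survivalCount_eq_deletionContraction nodup_wagnerEdges mem_wagnerEdges]
  decide +kernel

theorem survivalCount_wagner_three : wagner.survivalCount 3 = 212 := by
  rw [survivalCount_eq_deletionContraction nodup_wagnerEdges mem_wagnerEdges]
  decide +kernel

theorem survivalCount_wagner_four : wagner.survivalCount 4 = 409 := by
  rw [survivalCount_eq_deletionContraction nodup_wagnerEdges mem_wagnerEdges]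
  decide +kernel

theorem survivalCount_cube_four : cube.survivalCount 4 = 408 := by
  rw [survivalCount_eq_deletionContraction nodup_cubeEdges mem_cubeEdges]
  decide +kernel

theorem SubdivisionData.survivalCount_five_wagner {H : Multigraph} {w : wagner.E → ℕ} {q : ℕ}
    (S : SubdivisionData H wagner w) (hw : ∀ e ∈ wagnerOtherEdges, w e = q) :
    H.survivalCount 5 = 114 * q ^ 5 + 110 * w wagnerRail * q ^ 4 + 117 * w wagnerRung * q ^ 4 +
      51 * w wagnerRail * w wagnerRung * q ^ 3 := by
  have hneither : wagner.deletionContraction (fun _ => 1) wagnerOtherEdges 5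
      (wagner.mergeEnds (wagner.mergeEnds id wagnerRail) wagnerRung) = 114 := by
    decide +kernel
  have hrail : wagner.deletionContraction (fun _ => 1) wagnerOtherEdges 4
      (wagner.mergeEnds id wagnerRung) = 110 := by
    decide +kernel
  have hrung : wagner.deletionContraction (fun _ => 1) wagnerOtherEdges 4
      (wagner.mergeEnds id wagnerRail) = 117 := by
    decide +kernel
  have hboth : wagner.deletionContraction (fun _ => 1) wagnerOtherEdges 3 id = 51 := by
    decide +kernel
  rw [S.survivalCount_eq_deletionContraction nodup_wagnerEdges mem_wagnerEdges, wagnerEdges]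
  simp only [deletionContraction, deletionContraction_of_forall_eq hw, hneither, hrail, hrung,
    hboth]
  ring

end

/-! ### Optimal graphs -/

section

variable {B B' H : Multigraph} {n m : ℕ} {p : ℝ}

theorem UniquelyOptimal.pOptimal (h : UniquelyOptimal H n m) (hp0 : 0 < p) (hp1 : p < 1) :
    pOptimal H n m p := by
  refine ⟨h.1, fun K hK => ?_⟩
  by_cases hiso : IsIso H K
  · exact (hiso.rel_eq p).ge
  · exact (h.2 K hK hiso p hp0 hp1).le

theorem eventually_pOptimal_and_isIso (hB : memG B n m)
    (hlex : ∀ H, memG H n m → ¬ IsIso B H → toLex H.survivalCount < toLex B.survivalCount) :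
    ∀ᶠ p in 𝓝[<] 1, pOptimal B n m p ∧ ∀ H, pOptimal H n m p → IsIso B H := by
  filter_upwards [Multigraph.eventually_rel_lt_of_lex_lt m] with p hp
  have hlt {H : Multigraph} (hH : memG H n m) (hiso : ¬ IsIso B H) : H.rel p < B.rel p :=
    hp B H hB.2.1 hH.2.1 (hlex H hH hiso)
  refine ⟨⟨hB, fun H hH => ?_⟩, fun H hH => by_contra fun hiso => ?_⟩
  · by_cases hiso : IsIso B H
    · exact (hiso.rel_eq p).ge
    · exact (hlt hH hiso).le
  · exact (hH.2 B hB).not_gt (hlt hH.1 hiso)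

theorem not_exists_uniquelyOptimal (hB' : memG B' n m)
    (hunique : ∀ᶠ p in 𝓝[<] 1, ∀ H, pOptimal H n m p → IsIso B H)
    (hlt : ∀ᶠ p in 𝓝[>] 0, B.rel p < B'.rel p) : ¬ ∃ H, UniquelyOptimal H n m := by
  rintro ⟨H, hH⟩
  have hiso : IsIso B H := by
    obtain ⟨p, hp, hp0, hp1⟩ := (hunique.and (Ioo_mem_nhdsLT zero_lt_one)).exists
    exact hp H (hH.pOptimal hp0 hp1)
  obtain ⟨p, hp, hp0, hp1⟩ := (hlt.and (Ioo_mem_nhdsGT zero_lt_one)).exists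
  exact ((hH.pOptimal hp0 hp1).2 B' hB').not_gt (hiso.rel_eq p ▸ hp)

end

theorem exists_forall_gt_of_eventually_nhdsLT_one {P : ℝ → Prop} (h : ∀ᶠ p in 𝓝[<] 1, P p) :
    ∃ p₀ : ℝ, 0 < p₀ ∧ p₀ < 1 ∧ ∀ p, p₀ < p → p < 1 → P p := by
  obtain ⟨p₀, ⟨hp₀, hp₁⟩, hP⟩ :=
    (mem_nhdsLT_iff_exists_mem_Ico_Ioo_subset (l' := 1 / 2) (by norm_num)).1 h
  exact ⟨p₀, one_half_pos.trans_le hp₀, hp₁, fun p h0 h1 => hP ⟨h0, h1⟩⟩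

theorem exists_forall_lt_of_eventually_nhdsGT_zero {P : ℝ → Prop} (h : ∀ᶠ p in 𝓝[>] 0, P p) :
    ∃ p₁ : ℝ, 0 < p₁ ∧ p₁ < 1 ∧ ∀ p, 0 < p → p < p₁ → P p := by
  obtain ⟨p₁, ⟨hp₀, hp₁⟩, hP⟩ :=
    (mem_nhdsGT_iff_exists_mem_Ioc_Ioo_subset (u' := 1 / 2) (by norm_num)).1 h
  exact ⟨p₁, hp₀, hp₁.trans_lt one_half_lt_one, fun p h0 h1 => hP ⟨h0, h1⟩⟩

theorem sum_moveWeight {ι : Type} [Fintype ι] {w : ι → ℕ} {a b : ι} (hab : a ≠ b) (ha : 0 < w a) :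
    ∑ e, moveWeight w a b e = ∑ e, w e := by
  have hterm (e : ι) :
      moveWeight w a b e + (if e = a then 1 else 0) = w e + (if e = b then 1 else 0) := by
    unfold moveWeight
    split_ifs <;> grind
  have hsum := sum_congr rfl fun e (_ : e ∈ univ) => hterm e
  rw [sum_add_distrib, sum_add_distrib, sum_ite_eq', sum_ite_eq'] at hsum
  simpa using hsum

theorem moveWeight_pos {ι : Type} {w : ι → ℕ} {a b : ι} (hw : ∀ e, 0 < w e) (ha : 1 < w a) (e : ι) :
    0 < moveWeight w a b e := by
  unfold moveWeight
  split_ifs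
  exacts [Nat.succ_pos _, Nat.sub_pos_of_lt ha, hw e]

theorem wagner_connected : wagner.Connected := by
  have hbridgeless : wagner.survivalCount 1 = wagner.nE.choose 1 := survivalCount_wagner_one
  exact Multigraph.connected_iff_survives_empty.2 <|
    (Multigraph.survivalCount_eq_choose_iff.1 hbridgeless {wagnerRail} rfl).anti (empty_subset _)

section

variable {B H : Multigraph} {w : wagner.E → ℕ} {q : ℕ}

theorem SubdivisionData.memG_of_sum_wagner (S : SubdivisionData H wagner w)
    (hw : ∑ e, w e = 12 * q) : memG H (12 * q - 4) (12 * q) := by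
  have hV := S.nE_add_nV
  rw [S.nE_eq, hw, wagner_nV, wagner_nE] at hV
  exact ⟨by omega, S.nE_eq.trans hw, S.connected_iff.2 wagner_connected⟩

theorem sum_wagner_const : ∑ _e : wagner.E, q = 12 * q := by
  rw [sum_const, card_univ, smul_eq_mul]
  rfl

theorem forall_lt_succ_eq_of_not_toLex_lt {a b : ℕ → ℕ} (hlex : ¬ toLex a < toLex b) {i : ℕ}
    (heq : ∀ j < i, a j = b j) (hi : a i ≤ b i) : ∀ j < i + 1, a j = b j :=
  Nat.forall_lt_succ_right.2 ⟨heq, hi.antisymm <| not_lt.1 fun hlt => hlex ⟨i, heq, hlt⟩⟩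

theorem SubdivisionData.isIso_of_memDk_of_forall_survivalCount_eq {D : Multigraph}
    (S : SubdivisionData B wagner fun _ => q) (S' : SubdivisionData H D fun _ => q)
    (hD : memDk 4 D) (hq : 0 < q) (hlex : ¬ toLex H.survivalCount < toLex B.survivalCount)
    (heq : ∀ j < 3, H.survivalCount j = B.survivalCount j) : IsIso B H := by
  have hDV : D.nV = 8 := by have := hD.two_mul_nE; have := hD.2.2.2; omega
  have hDE : D.nE.choose 3 = 220 := by rw [hD.2.2.2, hDV]; rfl
  have hle_three : D.survivalCount 3 ≤ 212 := by
    have := hD.survivalCount_three_add_nV_le (by omega); omega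
  have heq_three : ∀ j < 4, H.survivalCount j = B.survivalCount j := by
    refine forall_lt_succ_eq_of_not_toLex_lt hlex heq ?_
    rw [S.survivalCount_const, S'.survivalCount_const, survivalCount_wagner_three]
    exact Nat.mul_le_mul_left _ hle_three
  have hD_three : D.survivalCount 3 = 212 := by
    have := heq_three 3 (by norm_num)
    rwa [S.survivalCount_const, S'.survivalCount_const, survivalCount_wagner_three,
      Nat.mul_right_inj (by positivity)] at this
  obtain ⟨⟨f⟩⟩ | hcube := hD.isIso_wagner_or_cube (by omega)
  · exact S.isIso (S'.map f.symm)
  · refine absurd ⟨4, heq_three, ?_⟩ hlex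
    change H.survivalCount 4 < B.survivalCount 4
    rw [S.survivalCount_const, S'.survivalCount_const, ← hcube.survivalCount_eq,
      survivalCount_cube_four, survivalCount_wagner_four]
    exact Nat.mul_lt_mul_of_pos_left (by norm_num) (by positivity)

theorem SubdivisionData.isIso_of_not_toLex_survivalCount_lt
    (S : SubdivisionData B wagner fun _ => q) (hq : 0 < q) (hH : memG H (12 * q - 4) (12 * q))
    (hlex : ¬ toLex H.survivalCount < toLex B.survivalCount) : IsIso B H := by
  obtain ⟨hV, hE, hconn⟩ := hH
  have hV' : H.nE = H.nV + 4 := by omega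
  have hB_zero : B.survivalCount 0 = 1 :=
    Multigraph.survivalCount_zero (S.connected_iff.2 wagner_connected)
  have hB_one : B.survivalCount 1 = H.nE.choose 1 := by
    rw [S.survivalCount_const, survivalCount_wagner_one, hE, Nat.choose_one_right, pow_one,
      mul_comm]
  have hB_two : B.survivalCount 2 = (3 * 4).choose 2 * q ^ 2 := by
    rw [S.survivalCount_const, survivalCount_wagner_two, mul_comm]
    rfl
  have heq_zero : ∀ j < 1, H.survivalCount j = B.survivalCount j :=
    forall_lt_succ_eq_of_not_toLex_lt hlex (by simp)
      (hB_zero ▸ (Multigraph.survivalCount_zero hconn).le)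
  have heq_one : ∀ j < 2, H.survivalCount j = B.survivalCount j :=
    forall_lt_succ_eq_of_not_toLex_lt hlex heq_zero (hB_one ▸ H.survivalCount_le_choose 1)
  have hbridge (e : H.E) : H.Survives {e} :=
    Multigraph.survivalCount_eq_choose_iff.1 ((heq_one 1 one_lt_two).trans hB_one) {e}
      (card_singleton e)
  have heq_two : ∀ j < 3, H.survivalCount j = B.survivalCount j :=
    forall_lt_succ_eq_of_not_toLex_lt hlex heq_one
      (hB_two ▸ survivalCount_two_le hconn hbridge four_pos hV' hE)
  obtain ⟨D, ⟨S'⟩, hD⟩ := exists_subdivisionData_const_of_survivalCount_two_eq hconn hbridge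
    four_pos hq hV' hE ((heq_two 2 (by norm_num)).trans hB_two)
  exact S.isIso_of_memDk_of_forall_survivalCount_eq S' hD hq hlex heq_two

theorem SubdivisionData.treeCount_eq_survivalCount_five (S : SubdivisionData H wagner w) :
    H.treeCount = H.survivalCount 5 := by
  refine Multigraph.treeCount_eq_survivalCount ?_
  have hV := S.nE_add_nV
  rw [wagner_nV, wagner_nE] at hV
  omega

theorem SubdivisionData.treeCount_moveWeight_wagner {B' : Multigraph} (hq : 8 ≤ q)
    (S : SubdivisionData B wagner fun _ => q)
    (S' : SubdivisionData B' wagner (moveWeight (fun _ => q) wagnerRail wagnerRung)) :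
    B'.treeCount = B.treeCount + (7 * q - 51) * q ^ 3 := by
  have hother : ∀ e ∈ wagnerOtherEdges, moveWeight (fun _ => q) wagnerRail wagnerRung e = q := by
    intro e he
    have hnodup := nodup_wagnerEdges
    simp only [wagnerEdges, List.nodup_cons, List.mem_cons] at hnodup
    simp only [moveWeight]
    grind
  rw [S.treeCount_eq_survivalCount_five, S'.treeCount_eq_survivalCount_five,
    S.survivalCount_five_wagner fun _ _ => rfl, S'.survivalCount_five_wagner hother]
  obtain ⟨r, rfl⟩ := Nat.exists_eq_add_of_le' hq
  have hrail : moveWeight (fun _ => r + 8) wagnerRail wagnerRung wagnerRail = r + 7 := by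
    simp [moveWeight]
  have hrung : moveWeight (fun _ => r + 8) wagnerRail wagnerRung wagnerRung = r + 9 := by
    simp [moveWeight]
  rw [hrail, hrung, show 7 * (r + 8) - 51 = 7 * r + 5 by omega]
  ring

end

/-- in 𝒢_{12q−4,12q}: (a) for p near 1 the perfectly balanced Wagner
subdivision (all chains of length q) is the unique p-optimal graph; (b) for q ≥ 8,
moving one edge from a rail chain to an adjacent rung chain gains (7q−51)q³ > 0
spanning trees, so the resulting graph is strictly more reliable for p near 0, and
no uniquely optimal graph exists in 𝒢_{12q−4,12q}. -/
theorem wagner_case_k4 (q : ℕ) (hq : 1 ≤ q) :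
    (∃ p₀ : ℝ, 0 < p₀ ∧ p₀ < 1 ∧ ∀ p : ℝ, p₀ < p → p < 1 →
      pOptimal (subdivide wagner fun _ => q) (12 * q - 4) (12 * q) p ∧
      ∀ H : Multigraph, pOptimal H (12 * q - 4) (12 * q) p →
        IsIso (subdivide wagner fun _ => q) H) ∧
    (8 ≤ q →
      (subdivide wagner
          (moveWeight (fun _ => q) (Sum.inl (0 : Fin 8)) (Sum.inr (0 : Fin 4)))).treeCount
        = (subdivide wagner fun _ => q).treeCount + (7 * q - 51) * q ^ 3 ∧
      0 < (7 * q - 51) * q ^ 3 ∧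
      (∃ p₁ : ℝ, 0 < p₁ ∧ p₁ < 1 ∧ ∀ p : ℝ, 0 < p → p < p₁ →
        (subdivide wagner fun _ => q).rel p <
          (subdivide wagner
            (moveWeight (fun _ => q) (Sum.inl (0 : Fin 8)) (Sum.inr (0 : Fin 4)))).rel p) ∧
      ¬ ∃ H : Multigraph, UniquelyOptimal H (12 * q - 4) (12 * q)) := by
  let S := SubdivisionData.ofSubdivide wagner (fun _ => q) fun _ => hq
  have hB := S.memG_of_sum_wagner sum_wagner_const
  have hnear_one := eventually_pOptimal_and_isIso hB fun H hH hiso =>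
    by_contra fun hlex => hiso (S.isIso_of_not_toLex_survivalCount_lt hq hH hlex)
  refine ⟨exists_forall_gt_of_eventually_nhdsLT_one hnear_one, fun hq8 => ?_⟩
  let S' := SubdivisionData.ofSubdivide wagner (moveWeight (fun _ => q) wagnerRail wagnerRung)
    (moveWeight_pos (fun _ => hq) (by omega))
  have hB' := S'.memG_of_sum_wagner
    ((sum_moveWeight Sum.inl_ne_inr hq).trans sum_wagner_const)
  have htree := S.treeCount_moveWeight_wagner hq8 S'
  have hgain : 0 < (7 * q - 51) * q ^ 3 := Nat.mul_pos (by omega) (by positivity)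
  have hnear_zero := Multigraph.eventually_rel_lt_of_treeCount_lt (k := 5)
    (hB'.1.trans hB.1.symm) (hB'.2.1.trans hB.2.1.symm) (by rw [hB.1, hB.2.1]; omega)
    (by rw [hB.2.1]; omega) (by omega)
  exact ⟨htree, hgain, exists_forall_lt_of_eventually_nhdsGT_zero hnear_zero,
    not_exists_uniquelyOptimal hB' (hnear_one.mono fun _ => And.right) hnear_zero⟩
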